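/- arXiv:1610.07219 — 8 statements merged into one kernel-verified Lean document; each statement's English description precedes it below -/
import Mathlib

section
/- Let s_1, s_2, s_3 be positive integers. Then for every natural number x, the number of x-colorings satisfies π(SK4^{s_1,s_2,s_3}, x) = π(θ_{s_1+1,s_2,s_3+1}, x) − π(θ_{s_1,s_2+1,s_3}, x). -/
/-!
Fix the colors `a`, `b` of the ends of a path with `s` edges and let `N s a b` be the number of
ways to color its interior (`pathCount`). Coloring the branch vertices first gives
`π(θ_{s₁,s₂,s₃}) = ∑_{a,b} N s₁ a b * N s₂ a b * N s₃ a b`, and `π(SK₄)` is the sum of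
`N s₁ w u * N s₂ w z * N s₃ w v` over all `w` and all pairwise distinct `u, z, v`.

Coloring the last interior vertex of a path first yields `N (s+1) a b = ∑_{c ≠ b} N s a c`.
Expanding the two long paths of `θ_{s₁+1,s₂,s₃+1}` in this way turns its count into the sum of
`N s₁ w u * N s₂ w z * N s₃ w v` over `u ≠ z` and `v ≠ z`. The terms with `u ≠ v` give `SK₄`; those
with `u = v` give `θ_{s₁,s₂+1,s₃}` by the same recurrence read backwards. This is
deletion-contraction of the edge `uv` of `SK₄`, carried out on colorings.
-/

open SimpleGraph Finset

/-- `chromPoly G x` is the number of proper `x`-colorings of the graph `G`,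
i.e. the value `π(G,x)` of the chromatic polynomial at `x`. -/
noncomputable def chromPoly {V : Type} (G : SimpleGraph V) (x : ℕ) : ℕ :=
  Nat.card {f : V → Fin x // ∀ ⦃u v : V⦄, G.Adj u v → f u ≠ f v}

/-- Relation generating the theta graph `θ_{s₁,s₂,s₃}`: vertex `Sum.inl 0` is `u`,
vertex `Sum.inl 1` is `v`, and the three `Fin (sᵢ - 1)` blocks are the internal
vertices of the three internally disjoint `u,v`-paths with `s₁`, `s₂`, `s₃` edges.
When `sᵢ = 1` the corresponding path is the single edge `uv` (coinciding edges
being identified, so the graph is simple). -/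
def thetaRel (s₁ s₂ s₃ : ℕ) :
    (Fin 2 ⊕ (Fin (s₁-1) ⊕ Fin (s₂-1) ⊕ Fin (s₃-1))) →
    (Fin 2 ⊕ (Fin (s₁-1) ⊕ Fin (s₂-1) ⊕ Fin (s₃-1))) → Prop
  | Sum.inl a, Sum.inl b => a = 0 ∧ b = 1 ∧ (s₁ = 1 ∨ s₂ = 1 ∨ s₃ = 1)
  | Sum.inl a, Sum.inr (Sum.inl i) => (a = 0 ∧ (i:ℕ) = 0) ∨ (a = 1 ∧ (i:ℕ) = s₁ - 2)
  | Sum.inl a, Sum.inr (Sum.inr (Sum.inl i)) => (a = 0 ∧ (i:ℕ) = 0) ∨ (a = 1 ∧ (i:ℕ) = s₂ - 2)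
  | Sum.inl a, Sum.inr (Sum.inr (Sum.inr i)) => (a = 0 ∧ (i:ℕ) = 0) ∨ (a = 1 ∧ (i:ℕ) = s₃ - 2)
  | Sum.inr (Sum.inl i), Sum.inr (Sum.inl j) => (j:ℕ) = (i:ℕ) + 1
  | Sum.inr (Sum.inr (Sum.inl i)), Sum.inr (Sum.inr (Sum.inl j)) => (j:ℕ) = (i:ℕ) + 1
  | Sum.inr (Sum.inr (Sum.inr i)), Sum.inr (Sum.inr (Sum.inr j)) => (j:ℕ) = (i:ℕ) + 1
  | _, _ => False

/-- The theta graph `θ_{s₁,s₂,s₃}`: two vertices joined by three internally disjoint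
paths with `s₁`, `s₂`, `s₃` edges (of order `s₁+s₂+s₃-1` when all `sᵢ ≥ 1`). -/
def thetaGraph (s₁ s₂ s₃ : ℕ) :
    SimpleGraph (Fin 2 ⊕ (Fin (s₁-1) ⊕ Fin (s₂-1) ⊕ Fin (s₃-1))) :=
  SimpleGraph.fromRel (thetaRel s₁ s₂ s₃)

/-- Relation generating the subdivision `SK₄^{s₁,s₂,s₃}` of `K₄`: vertex `Sum.inl 0`
is `w`; the three edges from `w` to the triangle vertices `Sum.inl 1`, `Sum.inl 2`,
`Sum.inl 3` are replaced by internally disjoint paths with `s₁`, `s₂`, `s₃` edges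
(internal vertices being the `Fin (sᵢ - 1)` blocks), and the triangle is undivided. -/
def sk4Rel (s₁ s₂ s₃ : ℕ) :
    (Fin 4 ⊕ (Fin (s₁-1) ⊕ Fin (s₂-1) ⊕ Fin (s₃-1))) →
    (Fin 4 ⊕ (Fin (s₁-1) ⊕ Fin (s₂-1) ⊕ Fin (s₃-1))) → Prop
  | Sum.inl a, Sum.inl b =>
      (a = 1 ∧ b = 2) ∨ (a = 1 ∧ b = 3) ∨ (a = 2 ∧ b = 3) ∨
      (a = 0 ∧ b = 1 ∧ s₁ = 1) ∨ (a = 0 ∧ b = 2 ∧ s₂ = 1) ∨ (a = 0 ∧ b = 3 ∧ s₃ = 1)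
  | Sum.inl a, Sum.inr (Sum.inl i) => (a = 0 ∧ (i:ℕ) = 0) ∨ (a = 1 ∧ (i:ℕ) = s₁ - 2)
  | Sum.inl a, Sum.inr (Sum.inr (Sum.inl i)) => (a = 0 ∧ (i:ℕ) = 0) ∨ (a = 2 ∧ (i:ℕ) = s₂ - 2)
  | Sum.inl a, Sum.inr (Sum.inr (Sum.inr i)) => (a = 0 ∧ (i:ℕ) = 0) ∨ (a = 3 ∧ (i:ℕ) = s₃ - 2)
  | Sum.inr (Sum.inl i), Sum.inr (Sum.inl j) => (j:ℕ) = (i:ℕ) + 1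
  | Sum.inr (Sum.inr (Sum.inl i)), Sum.inr (Sum.inr (Sum.inl j)) => (j:ℕ) = (i:ℕ) + 1
  | Sum.inr (Sum.inr (Sum.inr i)), Sum.inr (Sum.inr (Sum.inr j)) => (j:ℕ) = (i:ℕ) + 1
  | _, _ => False

/-- The subdivision `SK₄^{s₁,s₂,s₃}` of `K₄` in which the three edges incident to one
vertex `w` are replaced by internally disjoint paths with `s₁`, `s₂`, `s₃` edges,
while the opposite triangle is left undivided. -/
def sk4Graph (s₁ s₂ s₃ : ℕ) :
    SimpleGraph (Fin 4 ⊕ (Fin (s₁-1) ⊕ Fin (s₂-1) ⊕ Fin (s₃-1))) :=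
  SimpleGraph.fromRel (sk4Rel s₁ s₂ s₃)

/-- `g` properly colors the interior of a path with `s` edges whose first and last vertices have
the colors `a` and `b`. If `s = 1` there is no interior, and the condition says `a ≠ b`. -/
def PathOK {C : Type} (s : ℕ) (a b : C) (g : Fin (s - 1) → C) : Prop :=
  (s = 1 → a ≠ b) ∧ (∀ i : Fin (s - 1), (i : ℕ) = 0 → a ≠ g i) ∧ (∀ i : Fin (s - 1), (i : ℕ) = s - 2 → b ≠ g i) ∧
    ∀ i j : Fin (s - 1), (j : ℕ) = (i : ℕ) + 1 → g i ≠ g j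

/-- The number of proper colorings of the interior of a path with `s` edges whose ends have the
colors `a` and `b`. -/
noncomputable def pathCount (C : Type) (s : ℕ) (a b : C) : ℕ :=
  Nat.card {g : Fin (s - 1) → C // PathOK s a b g}

/-- A path with `n + 2` edges is properly colored iff the path without its last edge, which now ends
in the color `c` of the last interior vertex, is properly colored and `c ≠ b`. -/
lemma pathOK_snoc {C : Type} (n : ℕ) (a b c : C) (g : Fin n → C) :
    PathOK (n + 2) a b (Fin.snoc (α := fun _ => C) g c : Fin (n + 1) → C) ↔
      c ≠ b ∧ PathOK (n + 1) a c g := by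
  -- Definitional unfolding that replaces the index type `Fin (n + 2 - 1)` by `Fin (n + 1)`.
  have hP : ∀ g : Fin (n + 1) → C, PathOK (n + 2) a b g ↔ (n + 2 = 1 → a ≠ b) ∧
      (∀ i : Fin (n + 1), (i : ℕ) = 0 → a ≠ g i) ∧ (∀ i : Fin (n + 1), (i : ℕ) = n → b ≠ g i) ∧
      ∀ i j : Fin (n + 1), (j : ℕ) = (i : ℕ) + 1 → g i ≠ g j := fun _ => Iff.rfl
  rw [hP]
  simp only [PathOK, Fin.forall_fin_succ', Fin.snoc_castSucc, Fin.snoc_last,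
    Fin.val_castSucc, Fin.val_last]
  constructor
  · rintro ⟨-, ⟨h1, h1'⟩, ⟨h2, h2'⟩, h3⟩
    refine ⟨fun h => h2' trivial h.symm, fun h => h1' (by omega), h1, fun i hi => ?_, ?_⟩
    · exact ((h3.1 i).2 (by have := i.2; omega)).symm
    · exact fun i j hij => (h3.1 i).1 j hij
  · rintro ⟨hcb, h0, h1, h2, h3⟩
    refine ⟨fun h => by omega, ⟨h1, fun h => h0 (by omega)⟩,
      ⟨fun i hi => by have := i.2; omega, fun _ => hcb.symm⟩,
      fun i => ⟨fun j hij => h3 i j hij, fun h => (h2 i (by omega)).symm⟩,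
      fun j hj => by have := j.2; omega, fun h => by omega⟩

/-- Deleting the last edge of a path: the last interior vertex may have any color `c ≠ b`. -/
lemma pathCount_succ (C : Type) [Fintype C] [DecidableEq C] (s : ℕ) (hs : 1 ≤ s) (a b : C) :
    pathCount C (s + 1) a b = ∑ c, if c ≠ b then pathCount C s a c else 0 := by
  obtain ⟨n, rfl⟩ : ∃ n, s = n + 1 := ⟨s - 1, by omega⟩
  let F : (Σ c : {c : C // c ≠ b}, {g : Fin n → C // PathOK (n + 1) a c.1 g}) →
      {g : Fin (n + 1) → C // PathOK (n + 2) a b g} := fun p =>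
    ⟨Fin.snoc (α := fun _ => C) p.2.1 p.1.1, (pathOK_snoc n a b _ _).2 ⟨p.1.2, p.2.2⟩⟩
  have hF : Function.Bijective F := by
    constructor
    · rintro ⟨⟨c, hc⟩, ⟨g, hg⟩⟩ ⟨⟨c', hc'⟩, ⟨g', hg'⟩⟩ h
      obtain ⟨rfl, rfl⟩ := Fin.snoc_injective2 (α := fun _ => C) (Subtype.ext_iff.1 h)
      rfl
    · rintro ⟨g, hg⟩
      have h := (pathOK_snoc n a b (g (Fin.last n)) (Fin.init g)).1
        (by rw [Fin.snoc_init_self]; exact hg)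
      exact ⟨⟨⟨g (Fin.last n), h.1⟩, ⟨Fin.init g, h.2⟩⟩, Subtype.ext (Fin.snoc_init_self g)⟩
  have h : pathCount C (n + 1 + 1) a b =
      Nat.card (Σ c : {c : C // c ≠ b}, {g : Fin n → C // PathOK (n + 1) a c.1 g}) :=
    (Nat.card_eq_of_bijective F hF).symm
  rw [h, Nat.card_sigma, ← Finset.sum_filter]
  exact (Finset.sum_subtype _ (by simp) (fun c => pathCount C (n + 1) a c)).symm

/-- Consecutive indices are automatically distinct, so the condition `u ≠ v` that
`SimpleGraph.fromRel` adds is redundant along a path. -/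
lemma forall_ne_succ {n : ℕ} (P : Fin n → Fin n → Prop) :
    (∀ i j : Fin n, ¬ i = j → (j : ℕ) = (i : ℕ) + 1 → P i j) ↔
      ∀ i j : Fin n, (j : ℕ) = (i : ℕ) + 1 → P i j :=
  ⟨fun h i j hij => h i j (by rintro rfl; omega) hij, fun h i j _ hij => h i j hij⟩

/-- A coloring of a theta graph is proper iff it is proper along each of the three paths. -/
lemma proper_theta_iff {C : Type} (s₁ s₂ s₃ : ℕ)
    (f : Fin 2 ⊕ (Fin (s₁-1) ⊕ Fin (s₂-1) ⊕ Fin (s₃-1)) → C) :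
    (∀ ⦃u v⦄, (thetaGraph s₁ s₂ s₃).Adj u v → f u ≠ f v) ↔
      PathOK s₁ (f (.inl 0)) (f (.inl 1)) (fun i => f (.inr (.inl i))) ∧
      PathOK s₂ (f (.inl 0)) (f (.inl 1)) (fun i => f (.inr (.inr (.inl i)))) ∧
      PathOK s₃ (f (.inl 0)) (f (.inl 1)) (fun i => f (.inr (.inr (.inr i)))) := by
  have key : (∀ ⦃u v⦄, (thetaGraph s₁ s₂ s₃).Adj u v → f u ≠ f v) ↔
      ∀ u v, u ≠ v → thetaRel s₁ s₂ s₃ u v → f u ≠ f v := by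
    simp only [thetaGraph, SimpleGraph.fromRel_adj]
    constructor
    · exact fun h u v hne hr => h ⟨hne, Or.inl hr⟩
    · rintro h u v ⟨hne, hr | hr⟩
      · exact h u v hne hr
      · exact (h v u hne.symm hr).symm
  rw [key]
  simp only [Sum.forall, Fin.forall_fin_two, thetaRel, PathOK]
  simp [or_imp, forall_ne_succ]
  constructor <;> (intro h; casesm* _ ∧ _; constructorm* _ ∧ _) <;> assumption

/-- A coloring of `SK₄` is proper iff the triangle receives three distinct colors and the coloring
is proper along each of the three subdivided edges. -/
lemma proper_sk4_iff {C : Type} (s₁ s₂ s₃ : ℕ)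
    (f : Fin 4 ⊕ (Fin (s₁-1) ⊕ Fin (s₂-1) ⊕ Fin (s₃-1)) → C) :
    (∀ ⦃u v⦄, (sk4Graph s₁ s₂ s₃).Adj u v → f u ≠ f v) ↔
      (f (.inl 1) ≠ f (.inl 2) ∧ f (.inl 1) ≠ f (.inl 3) ∧ f (.inl 2) ≠ f (.inl 3)) ∧
      PathOK s₁ (f (.inl 0)) (f (.inl 1)) (fun i => f (.inr (.inl i))) ∧
      PathOK s₂ (f (.inl 0)) (f (.inl 2)) (fun i => f (.inr (.inr (.inl i)))) ∧
      PathOK s₃ (f (.inl 0)) (f (.inl 3)) (fun i => f (.inr (.inr (.inr i)))) := by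
  have key : (∀ ⦃u v⦄, (sk4Graph s₁ s₂ s₃).Adj u v → f u ≠ f v) ↔
      ∀ u v, u ≠ v → sk4Rel s₁ s₂ s₃ u v → f u ≠ f v := by
    simp only [sk4Graph, SimpleGraph.fromRel_adj]
    constructor
    · exact fun h u v hne hr => h ⟨hne, Or.inl hr⟩
    · rintro h u v ⟨hne, hr | hr⟩
      · exact h u v hne hr
      · exact (h v u hne.symm hr).symm
  rw [key]
  simp only [Sum.forall, Fin.forall_fin_succ, sk4Rel, PathOK]
  simp [or_imp, forall_ne_succ]
  constructor <;> (intro h; casesm* _ ∧ _; constructorm* _ ∧ _) <;> assumption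

lemma chromPoly_theta (s₁ s₂ s₃ x : ℕ) :
    chromPoly (thetaGraph s₁ s₂ s₃) x = ∑ a : Fin x, ∑ b : Fin x,
      pathCount (Fin x) s₁ a b * pathCount (Fin x) s₂ a b * pathCount (Fin x) s₃ a b := by
  have e : {f : Fin 2 ⊕ (Fin (s₁-1) ⊕ Fin (s₂-1) ⊕ Fin (s₃-1)) → Fin x //
        ∀ ⦃u v⦄, (thetaGraph s₁ s₂ s₃).Adj u v → f u ≠ f v} ≃
      Σ p : Fin x × Fin x, {g // PathOK s₁ p.1 p.2 g} × {g // PathOK s₂ p.1 p.2 g} ×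
        {g // PathOK s₃ p.1 p.2 g} :=
    { toFun := fun f =>
        have h := (proper_theta_iff s₁ s₂ s₃ f.1).1 f.2
        ⟨(f.1 (.inl 0), f.1 (.inl 1)), ⟨_, h.1⟩, ⟨_, h.2.1⟩, ⟨_, h.2.2⟩⟩
      invFun := fun p => ⟨Sum.elim ![p.1.1, p.1.2]
          (Sum.elim p.2.1.1 (Sum.elim p.2.2.1.1 p.2.2.2.1)),
        (proper_theta_iff s₁ s₂ s₃ _).2 ⟨p.2.1.2, p.2.2.1.2, p.2.2.2.2⟩⟩
      left_inv := by
        rintro ⟨f, hf⟩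
        refine Subtype.ext (funext ?_)
        rintro (i | i | i | i)
        · fin_cases i <;> rfl
        all_goals rfl
      right_inv := fun _ => rfl }
  rw [chromPoly, Nat.card_congr e, Nat.card_sigma, Fintype.sum_prod_type]
  simp only [Nat.card_prod, pathCount, mul_assoc]

lemma chromPoly_sk4 (s₁ s₂ s₃ x : ℕ) :
    chromPoly (sk4Graph s₁ s₂ s₃) x = ∑ w : Fin x, ∑ u : Fin x, ∑ z : Fin x, ∑ v : Fin x,
      if u ≠ z ∧ u ≠ v ∧ z ≠ v then
        pathCount (Fin x) s₁ w u * pathCount (Fin x) s₂ w z * pathCount (Fin x) s₃ w v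
      else 0 := by
  have e : {f : Fin 4 ⊕ (Fin (s₁-1) ⊕ Fin (s₂-1) ⊕ Fin (s₃-1)) → Fin x //
        ∀ ⦃u v⦄, (sk4Graph s₁ s₂ s₃).Adj u v → f u ≠ f v} ≃
      Σ p : {p : Fin x × Fin x × Fin x × Fin x //
          p.2.1 ≠ p.2.2.1 ∧ p.2.1 ≠ p.2.2.2 ∧ p.2.2.1 ≠ p.2.2.2},
        {g // PathOK s₁ p.1.1 p.1.2.1 g} × {g // PathOK s₂ p.1.1 p.1.2.2.1 g} ×
        {g // PathOK s₃ p.1.1 p.1.2.2.2 g} :=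
    { toFun := fun f =>
        have h := (proper_sk4_iff s₁ s₂ s₃ f.1).1 f.2
        ⟨⟨(f.1 (.inl 0), f.1 (.inl 1), f.1 (.inl 2), f.1 (.inl 3)), h.1⟩,
          ⟨_, h.2.1⟩, ⟨_, h.2.2.1⟩, ⟨_, h.2.2.2⟩⟩
      invFun := fun p => ⟨Sum.elim ![p.1.1.1, p.1.1.2.1, p.1.1.2.2.1, p.1.1.2.2.2]
          (Sum.elim p.2.1.1 (Sum.elim p.2.2.1.1 p.2.2.2.1)),
        (proper_sk4_iff s₁ s₂ s₃ _).2 ⟨p.1.2, p.2.1.2, p.2.2.1.2, p.2.2.2.2⟩⟩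
      left_inv := by
        rintro ⟨f, hf⟩
        refine Subtype.ext (funext ?_)
        rintro (i | i | i | i)
        · fin_cases i <;> rfl
        all_goals rfl
      right_inv := fun _ => rfl }
  rw [chromPoly, Nat.card_congr e, Nat.card_sigma]
  simp only [Nat.card_prod]
  change ∑ p : {p : Fin x × Fin x × Fin x × Fin x // _},
    pathCount (Fin x) s₁ p.1.1 p.1.2.1 *
      (pathCount (Fin x) s₂ p.1.1 p.1.2.2.1 * pathCount (Fin x) s₃ p.1.1 p.1.2.2.2) = _
  rw [← Finset.sum_subtype (Finset.univ.filter fun p : Fin x × Fin x × Fin x × Fin x =>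
      p.2.1 ≠ p.2.2.1 ∧ p.2.1 ≠ p.2.2.2 ∧ p.2.2.1 ≠ p.2.2.2) (by simp)
    (fun p => pathCount (Fin x) s₁ p.1 p.2.1 *
      (pathCount (Fin x) s₂ p.1 p.2.2.1 * pathCount (Fin x) s₃ p.1 p.2.2.2)),
    Finset.sum_filter]
  simp only [Fintype.sum_prod_type, mul_assoc]

/-- **Equation (3)** of the paper.  For positive integers `s₁, s₂, s₃` and every natural
number `x`, `π(SK₄^{s₁,s₂,s₃}, x) = π(θ_{s₁+1,s₂,s₃+1}, x) - π(θ_{s₁,s₂+1,s₃}, x)`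
(as an identity of integers). -/
theorem statement_10 (s₁ s₂ s₃ : ℕ) (h₁ : 1 ≤ s₁) (h₂ : 1 ≤ s₂) (h₃ : 1 ≤ s₃) (x : ℕ) :
    (chromPoly (sk4Graph s₁ s₂ s₃) x : ℤ) =
      (chromPoly (thetaGraph (s₁ + 1) s₂ (s₃ + 1)) x : ℤ)
        - (chromPoly (thetaGraph s₁ (s₂ + 1) s₃) x : ℤ) := by
  suffices h : chromPoly (thetaGraph (s₁ + 1) s₂ (s₃ + 1)) x =
      chromPoly (sk4Graph s₁ s₂ s₃) x + chromPoly (thetaGraph s₁ (s₂ + 1) s₃) x by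
    rw [h]; push_cast; ring
  simp only [chromPoly_theta, chromPoly_sk4, pathCount_succ _ _ h₁, pathCount_succ _ _ h₂,
    pathCount_succ _ _ h₃]
  rw [← Finset.sum_add_distrib]
  refine Finset.sum_congr rfl fun w _ => ?_
  -- Write both `θ` counts as sums over `u, z, v`; the condition `u = v` selects the merged color.
  have hm : ∀ u, pathCount (Fin x) s₁ w u *
        (∑ z, if z ≠ u then pathCount (Fin x) s₂ w z else 0) * pathCount (Fin x) s₃ w u =
      ∑ z, ∑ v, if z ≠ u ∧ u = v then
        pathCount (Fin x) s₁ w u * pathCount (Fin x) s₂ w z * pathCount (Fin x) s₃ w v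
      else 0 := by
    intro u
    rw [Finset.mul_sum, Finset.sum_mul]
    refine Finset.sum_congr rfl fun z _ => ?_
    by_cases hz : z = u <;> simp [hz]
  have hl : ∀ z, (∑ u, if u ≠ z then pathCount (Fin x) s₁ w u else 0) *
        pathCount (Fin x) s₂ w z * (∑ v, if v ≠ z then pathCount (Fin x) s₃ w v else 0) =
      ∑ u, ∑ v, if u ≠ z ∧ v ≠ z then
        pathCount (Fin x) s₁ w u * pathCount (Fin x) s₂ w z * pathCount (Fin x) s₃ w v
      else 0 := by
    intro z
    rw [Finset.sum_mul, Finset.sum_mul_sum]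
    refine Finset.sum_congr rfl fun u _ => Finset.sum_congr rfl fun v _ => ?_
    by_cases hu : u = z <;> by_cases hv : v = z <;> simp [hu, hv]
  simp only [hm, hl]
  rw [Finset.sum_comm, ← Finset.sum_add_distrib]
  refine Finset.sum_congr rfl fun u _ => ?_
  rw [← Finset.sum_add_distrib]
  refine Finset.sum_congr rfl fun z _ => ?_
  rw [← Finset.sum_add_distrib]
  refine Finset.sum_congr rfl fun v _ => ?_
  by_cases huz : u = z <;> by_cases hvz : v = z <;> by_cases huv : u = v <;>
    simp_all [eq_comm]
end

section
/- Let t ≥ 1 and let a_i, b_i, c_i (1 ≤ i ≤ t) be positive integers, let G = G(a,b,c) be the corresponding subdivision of K_{3,t}, of order n = Σ_{i=1}^t (a_i+b_i+c_i) − 2t + 3, and define F(x,t) = 3·(1 + 1/x + 1/x^3 + 1/x^4)^t + (1/x)·(1 + 2/x + 1/x^2)^t + (x−1)·(1 + 2/x^2)^t. Then for every natural number x ≥ 2, the real-number inequality (x+1)^(2t−1)·π(G, x+1) ≤ x^(n+2t−2)·F(x,t) holds. -/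
/-!
Fix a colour set of size `q = x + 1`. For a path with `a` edges whose ends are coloured `h` and `s`,
the number of ways to colour the inner vertices is `x ^ a * (1 + α * e) / q`, where
`α = (-1) ^ a / x ^ a` and `e` is `x` if `h = s` and `-1` otherwise (`card_pathCol_le`).
A colouring of the subdivision consists of the colours of the three hubs and, independently for
each `i`, a colour `s` of the spoke `i` and colourings of the three paths at that spoke
(`chromPoly_le`). Summing over `s` gives, for each `i`, a factor `x ^ (a i + b i + c i) / q ^ 2`
times a multi-affine polynomial in `α, β, γ ∈ [-1/x, 1/x²]`, which depends only on the coincidences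
among the hub colours (`sum_spoke_le`). The maximum of this polynomial over the vertices of the box
is `1 + 2/x + 1/x²` if the three hubs agree, `1 + 1/x + 1/x³ + 1/x⁴` if exactly two agree, and at
most `1 + 2/x²` if they are distinct. There are `q`, `3 q x` and `q x (x - 1)` hub colourings of
these types, which is where the three summands of `F(x,t)` come from (`sum_hubFactor`).

Only upper bounds on the numbers of colourings are needed, so injections suffice throughout.
-/

open SimpleGraph Finset

/-- Relation generating the subdivision of `K_{3,t}`: the three hubs are `Sum.inl 0`,
`Sum.inl 1`, `Sum.inl 2`, the spokes are `Sum.inr (Sum.inl i)` for `i : Fin t`, and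
for each `i` the edge from hub `0` (resp. `1`, `2`) to spoke `i` is replaced by an
internally disjoint path with `a i` (resp. `b i`, `c i`) edges, whose internal
vertices form the corresponding block of the sigma type. -/
def k3tRel (t : ℕ) (a b c : Fin t → ℕ) :
    (Fin 3 ⊕ Fin t ⊕ (Σ i : Fin t, (Fin (a i - 1) ⊕ Fin (b i - 1) ⊕ Fin (c i - 1)))) →
    (Fin 3 ⊕ Fin t ⊕ (Σ i : Fin t, (Fin (a i - 1) ⊕ Fin (b i - 1) ⊕ Fin (c i - 1)))) → Prop
  | Sum.inl k, Sum.inr (Sum.inl i) =>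
      (k = 0 ∧ a i = 1) ∨ (k = 1 ∧ b i = 1) ∨ (k = 2 ∧ c i = 1)
  | Sum.inl k, Sum.inr (Sum.inr ⟨_, Sum.inl j⟩) => k = 0 ∧ (j:ℕ) = 0
  | Sum.inl k, Sum.inr (Sum.inr ⟨_, Sum.inr (Sum.inl j)⟩) => k = 1 ∧ (j:ℕ) = 0
  | Sum.inl k, Sum.inr (Sum.inr ⟨_, Sum.inr (Sum.inr j)⟩) => k = 2 ∧ (j:ℕ) = 0
  | Sum.inr (Sum.inl i), Sum.inr (Sum.inr ⟨i', Sum.inl j⟩) => i = i' ∧ (j:ℕ) = a i' - 2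
  | Sum.inr (Sum.inl i), Sum.inr (Sum.inr ⟨i', Sum.inr (Sum.inl j)⟩) => i = i' ∧ (j:ℕ) = b i' - 2
  | Sum.inr (Sum.inl i), Sum.inr (Sum.inr ⟨i', Sum.inr (Sum.inr j)⟩) => i = i' ∧ (j:ℕ) = c i' - 2
  | Sum.inr (Sum.inr ⟨i, Sum.inl j⟩), Sum.inr (Sum.inr ⟨i', Sum.inl j'⟩) =>
      i = i' ∧ (j':ℕ) = (j:ℕ) + 1
  | Sum.inr (Sum.inr ⟨i, Sum.inr (Sum.inl j)⟩), Sum.inr (Sum.inr ⟨i', Sum.inr (Sum.inl j')⟩) =>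
      i = i' ∧ (j':ℕ) = (j:ℕ) + 1
  | Sum.inr (Sum.inr ⟨i, Sum.inr (Sum.inr j)⟩), Sum.inr (Sum.inr ⟨i', Sum.inr (Sum.inr j')⟩) =>
      i = i' ∧ (j':ℕ) = (j:ℕ) + 1
  | _, _ => False

/-- The subdivision `G(a,b,c)` of `K_{3,t}` with bipartition hubs `{u₁,u₂,u₃}` and
spokes `{v₁,…,v_t}` in which, for each `i`, the edge `u₁vᵢ` is replaced by a path
with `a i` edges, `u₂vᵢ` by a path with `b i` edges and `u₃vᵢ` by a path with
`c i` edges, all `3t` paths being internally disjoint.  It has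
`(∑ i, (a i + b i + c i)) - 2t + 3` vertices. -/
def k3tGraph (t : ℕ) (a b c : Fin t → ℕ) :
    SimpleGraph (Fin 3 ⊕ Fin t ⊕ (Σ i : Fin t, (Fin (a i - 1) ⊕ Fin (b i - 1) ⊕ Fin (c i - 1)))) :=
  SimpleGraph.fromRel (k3tRel t a b c)

/-! ### Counting colourings of paths -/

/-- Proper colourings, with colour set `Fin q`, of the `m` inner vertices of a path with `m + 1`
edges whose end vertices have the colours `h` and `s`. For `m = 0` the ends are adjacent, and the
type has one element or none according to whether `h ≠ s`. -/
def PathCol (q m : ℕ) (h s : Fin q) : Type :=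
  {p : Fin m → Fin q // (m = 0 → h ≠ s) ∧ (∀ j : Fin m, (j : ℕ) = 0 → h ≠ p j) ∧
    (∀ j : Fin m, (j : ℕ) = m - 1 → s ≠ p j) ∧
    (∀ j j' : Fin m, (j' : ℕ) = (j : ℕ) + 1 → p j ≠ p j')}

instance (q m : ℕ) (h s : Fin q) : Finite (PathCol q m h s) := by
  unfold PathCol; infer_instance

/-- Removing the inner vertex next to the end coloured `h` shortens the path by one edge, and the
colour of the removed vertex is the colour of the new end. -/
lemma card_pathCol_succ_le (q m : ℕ) (h s : Fin q) :
    Nat.card (PathCol q (m + 1) h s) ≤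
      ∑ c : Fin q, if c = h then 0 else Nat.card (PathCol q m c s) := by
  let F : PathCol q (m + 1) h s → Σ c : {c : Fin q // c ≠ h}, PathCol q m c.1 s := fun p =>
    ⟨⟨p.1 0, fun e => p.2.2.1 0 rfl e.symm⟩, fun j => p.1 j.succ, by
      obtain ⟨p, h1, h2, h3, h4⟩ := p
      refine ⟨fun hm => ?_, fun j hj => ?_, fun j hj => ?_, fun j j' hj => ?_⟩
      · exact (h3 0 (by simp [hm])).symm
      · exact h4 0 j.succ (by simp [hj])
      · exact h3 j.succ (by have := j.2; simp only [Fin.val_succ]; omega)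
      · exact h4 j.succ j'.succ (by simp [hj])⟩
  -- The colouring is recovered by putting the removed colour back in front.
  let g : (Σ c : {c : Fin q // c ≠ h}, PathCol q m c.1 s) → Fin (m + 1) → Fin q :=
    fun r => Fin.cons r.1.1 r.2.1
  have hg : ∀ p, g (F p) = p.1 := by
    intro p
    funext j
    refine Fin.cases rfl (fun j => rfl) j
  have hF : Function.Injective F := fun p p' e => Subtype.ext (by rw [← hg p, ← hg p', e])
  refine (Nat.card_le_card_of_injective F hF).trans (le_of_eq ?_)
  rw [Nat.card_sigma, Finset.sum_ite, Finset.sum_const_zero, zero_add]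
  exact (Finset.sum_subtype _ (by simp) (fun c => Nat.card (PathCol q m c s))).symm

/-- The excess `q * [h = s] - 1` with `q = x + 1`. As a function of either colour it
sums to zero over all colours. -/
def exc {q : ℕ} (x : ℝ) (h s : Fin q) : ℝ := if h = s then x else -1

lemma sum_exc (x : ℕ) (s : Fin (x + 1)) : ∑ c : Fin (x + 1), exc (x : ℝ) c s = 0 := by
  have : ∀ c : Fin (x + 1), exc (x : ℝ) c s = (if c = s then (x : ℝ) + 1 else 0) - 1 := by
    intro c; unfold exc; split_ifs <;> ring
  simp [this, Finset.sum_sub_distrib]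

/-- The standard count of colourings of a path with prescribed end colours, as an upper bound and
cleared of the denominator `x + 1`. -/
lemma card_pathCol_le (x m : ℕ) (h s : Fin (x + 1)) :
    ((x : ℝ) + 1) * (Nat.card (PathCol (x + 1) m h s) : ℝ) ≤
      (x : ℝ) ^ (m + 1) + (-1) ^ (m + 1) * exc (x : ℝ) h s := by
  induction m generalizing h with
  | zero =>
    by_cases hs : h = s
    · have : IsEmpty (PathCol (x + 1) 0 h s) := ⟨fun p => p.2.1 rfl hs⟩
      rw [Nat.card_of_isEmpty]
      simp [exc, hs]
    · have : Subsingleton (PathCol (x + 1) 0 h s) :=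
        ⟨fun p p' => Subtype.ext (Subsingleton.elim _ _)⟩
      have h1 : (Nat.card (PathCol (x + 1) 0 h s) : ℝ) ≤ 1 := by
        exact_mod_cast Finite.card_le_one_iff_subsingleton.2 this
      have h2 := mul_le_mul_of_nonneg_left h1 (by positivity : (0 : ℝ) ≤ (x : ℝ) + 1)
      simp only [exc, hs, if_false, zero_add, pow_one]
      linarith
  | succ m ih =>
    have h1 : (Nat.card (PathCol (x + 1) (m + 1) h s) : ℝ) ≤
        ∑ c : Fin (x + 1), if c = h then 0 else (Nat.card (PathCol (x + 1) m c s) : ℝ) := by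
      exact_mod_cast card_pathCol_succ_le (x + 1) m h s
    calc ((x : ℝ) + 1) * (Nat.card (PathCol (x + 1) (m + 1) h s) : ℝ)
        ≤ ((x : ℝ) + 1) * ∑ c : Fin (x + 1),
            if c = h then 0 else (Nat.card (PathCol (x + 1) m c s) : ℝ) := by gcongr
      _ = ∑ c : Fin (x + 1), if c = h then 0 else
            ((x : ℝ) + 1) * (Nat.card (PathCol (x + 1) m c s) : ℝ) := by
          rw [Finset.mul_sum]; simp
      _ ≤ ∑ c : Fin (x + 1), if c = h then 0 else
            ((x : ℝ) ^ (m + 1) + (-1) ^ (m + 1) * exc (x : ℝ) c s) := by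
          refine Finset.sum_le_sum fun c _ => ?_
          split_ifs
          · exact le_rfl
          · exact ih c
      _ = ∑ c : Fin (x + 1), (((x : ℝ) ^ (m + 1) + (-1) ^ (m + 1) * exc (x : ℝ) c s) -
            if c = h then ((x : ℝ) ^ (m + 1) + (-1) ^ (m + 1) * exc (x : ℝ) h s) else 0) := by
          refine Finset.sum_congr rfl fun c _ => ?_
          split_ifs with hc
          · subst hc; ring
          · ring
      _ = _ := by
          rw [Finset.sum_sub_distrib, Finset.sum_add_distrib, ← Finset.mul_sum, sum_exc]
          simp
          ring

/-! ### Splitting a colouring into hubs, spokes and paths -/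

lemma chromPoly_le (t : ℕ) (a b c : Fin t → ℕ)
    (ha : ∀ i, 1 ≤ a i) (hb : ∀ i, 1 ≤ b i) (hc : ∀ i, 1 ≤ c i) (q : ℕ) :
    chromPoly (k3tGraph t a b c) q ≤ ∑ h : Fin q × Fin q × Fin q, ∏ i, ∑ s : Fin q,
      Nat.card (PathCol q (a i - 1) h.1 s) * (Nat.card (PathCol q (b i - 1) h.2.1 s) *
        Nat.card (PathCol q (c i - 1) h.2.2 s)) := by
  let T : Type := Σ h : Fin q × Fin q × Fin q, (i : Fin t) → Σ s : Fin q,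
    (PathCol q (a i - 1) h.1 s × PathCol q (b i - 1) h.2.1 s × PathCol q (c i - 1) h.2.2 s)
  have key : ∀ f : (Fin 3 ⊕ Fin t ⊕
      (Σ i : Fin t, (Fin (a i - 1) ⊕ Fin (b i - 1) ⊕ Fin (c i - 1)))) → Fin q,
      (∀ ⦃u v⦄, (k3tGraph t a b c).Adj u v → f u ≠ f v) →
      ∀ u v, k3tRel t a b c u v → u ≠ v → f u ≠ f v := by
    intro f hf u v huv hne
    exact hf ((SimpleGraph.fromRel_adj _ _ _).2 ⟨hne, Or.inl huv⟩)
  let F : {f : (Fin 3 ⊕ Fin t ⊕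
      (Σ i : Fin t, (Fin (a i - 1) ⊕ Fin (b i - 1) ⊕ Fin (c i - 1)))) → Fin q //
        ∀ ⦃u v⦄, (k3tGraph t a b c).Adj u v → f u ≠ f v} → T := fun f =>
    ⟨(f.1 (Sum.inl 0), f.1 (Sum.inl 1), f.1 (Sum.inl 2)), fun i => ⟨f.1 (Sum.inr (Sum.inl i)),
      ⟨fun j => f.1 (Sum.inr (Sum.inr ⟨i, Sum.inl j⟩)), by
        have k := key f.1 f.2
        refine ⟨fun hm => k _ _ ?_ ?_, fun j hj => k _ _ ?_ ?_, fun j hj => k _ _ ?_ ?_,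
          fun j j' hj => k _ _ ?_ ?_⟩
        · have := ha i
          exact Or.inl ⟨rfl, by omega⟩
        · simp
        · exact ⟨rfl, hj⟩
        · simp
        · exact ⟨rfl, hj⟩
        · simp
        · exact ⟨rfl, hj⟩
        · intro e
          simp only [Sum.inr.injEq, Sigma.mk.injEq, heq_eq_eq, true_and, Sum.inl.injEq] at e
          subst e; omega⟩,
      ⟨fun j => f.1 (Sum.inr (Sum.inr ⟨i, Sum.inr (Sum.inl j)⟩)), by
        have k := key f.1 f.2
        refine ⟨fun hm => k _ _ ?_ ?_, fun j hj => k _ _ ?_ ?_, fun j hj => k _ _ ?_ ?_,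
          fun j j' hj => k _ _ ?_ ?_⟩
        · have := hb i
          exact Or.inr (Or.inl ⟨rfl, by omega⟩)
        · simp
        · exact ⟨rfl, hj⟩
        · simp
        · exact ⟨rfl, hj⟩
        · simp
        · exact ⟨rfl, hj⟩
        · intro e
          simp only [Sum.inr.injEq, Sigma.mk.injEq, heq_eq_eq, true_and, Sum.inl.injEq] at e
          subst e; omega⟩,
      ⟨fun j => f.1 (Sum.inr (Sum.inr ⟨i, Sum.inr (Sum.inr j)⟩)), by
        have k := key f.1 f.2
        refine ⟨fun hm => k _ _ ?_ ?_, fun j hj => k _ _ ?_ ?_, fun j hj => k _ _ ?_ ?_,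
          fun j j' hj => k _ _ ?_ ?_⟩
        · have := hc i
          exact Or.inr (Or.inr ⟨rfl, by omega⟩)
        · simp
        · exact ⟨rfl, hj⟩
        · simp
        · exact ⟨rfl, hj⟩
        · simp
        · exact ⟨rfl, hj⟩
        · intro e
          simp only [Sum.inr.injEq, Sigma.mk.injEq, heq_eq_eq, true_and] at e
          subst e; omega⟩⟩⟩
  -- A colouring is recovered from its hub, spoke and path parts.
  let g : T → (Fin 3 ⊕ Fin t ⊕
      (Σ i : Fin t, (Fin (a i - 1) ⊕ Fin (b i - 1) ⊕ Fin (c i - 1)))) → Fin q := fun r v =>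
    match v with
    | Sum.inl k => ![r.1.1, r.1.2.1, r.1.2.2] k
    | Sum.inr (Sum.inl i) => (r.2 i).1
    | Sum.inr (Sum.inr ⟨i, Sum.inl j⟩) => (r.2 i).2.1.1 j
    | Sum.inr (Sum.inr ⟨i, Sum.inr (Sum.inl j)⟩) => (r.2 i).2.2.1.1 j
    | Sum.inr (Sum.inr ⟨i, Sum.inr (Sum.inr j)⟩) => (r.2 i).2.2.2.1 j
  have hg : ∀ f, g (F f) = f.1 := by
    intro f
    funext v
    rcases v with k | i | ⟨i, j | j | j⟩
    · fin_cases k <;> rfl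
    all_goals rfl
  have hF : Function.Injective F := fun f f' e => Subtype.ext (by rw [← hg f, ← hg f', e])
  have hle := Nat.card_le_card_of_injective F hF
  have hT : Nat.card T = ∑ h : Fin q × Fin q × Fin q, ∏ i, ∑ s : Fin q,
      Nat.card (PathCol q (a i - 1) h.1 s) * (Nat.card (PathCol q (b i - 1) h.2.1 s) *
        Nat.card (PathCol q (c i - 1) h.2.2 s)) := by
    simp only [T, Nat.card_sigma, Nat.card_pi, Nat.card_prod]
  exact hle.trans hT.le

/-! ### Bounding the contribution of one spoke -/

/-- The bound for the contribution of a spoke, as a function of the coincidences among the hub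
colours: `A` if all three agree, `B` if exactly two agree, `D` if they are distinct. -/
def hubFactor {q : ℕ} (A B D : ℝ) (h : Fin q × Fin q × Fin q) : ℝ :=
  if h.1 = h.2.1 then (if h.2.1 = h.2.2 then A else B)
  else if h.1 = h.2.2 then B else if h.2.1 = h.2.2 then B else D

lemma sum_hubFactor (x : ℕ) (A B D : ℝ) :
    ∑ h : Fin (x + 1) × Fin (x + 1) × Fin (x + 1), hubFactor A B D h =
      ((x : ℝ) + 1) * (A + 3 * x * B + x * (x - 1) * D) := by
  have : ∀ h : Fin (x + 1) × Fin (x + 1) × Fin (x + 1), hubFactor A B D h =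
      D + ((if h.1 = h.2.1 then B - D else 0) + ((if h.1 = h.2.2 then B - D else 0) +
        ((if h.2.1 = h.2.2 then B - D else 0) +
          (if h.1 = h.2.1 then (if h.2.1 = h.2.2 then A - 3 * B + 2 * D else 0) else 0)))) := by
    rintro ⟨h0, h1, h2⟩
    unfold hubFactor
    dsimp only
    split_ifs <;> first | (subst_vars; simp_all; done) | ring
  have e1 : ∑ u : Fin (x + 1), ∑ v : Fin (x + 1), ∑ _w : Fin (x + 1),
      (if u = v then B - D else 0) = ((x : ℝ) + 1) ^ 2 * (B - D) := by
    simp only [Finset.sum_const, ← Finset.smul_sum, Finset.sum_ite_eq]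
    simp
    ring
  simp only [this, Fintype.sum_prod_type, Finset.sum_add_distrib, e1]
  simp
  ring

/-- The exact value of the sum over the colours `s` of a spoke, after expanding the product. -/
lemma sum_spoke (x : ℕ) (α β γ : ℝ) (h : Fin (x + 1) × Fin (x + 1) × Fin (x + 1)) :
    ∑ s : Fin (x + 1), (1 + α * exc x h.1 s) * ((1 + β * exc x h.2.1 s) *
        (1 + γ * exc x h.2.2 s)) = ((x : ℝ) + 1) *
      (if h.1 = h.2.1 then
        (if h.2.1 = h.2.2 then 1 + x * (α * β + β * γ + α * γ) + x * (x - 1) * (α * β * γ)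
         else 1 + x * (α * β) - γ * (α + β) - (x - 1) * (α * β * γ))
      else if h.1 = h.2.2 then 1 + x * (α * γ) - β * (α + γ) - (x - 1) * (α * β * γ)
      else if h.2.1 = h.2.2 then 1 + x * (β * γ) - α * (β + γ) - (x - 1) * (α * β * γ)
      else 1 - (α * β + β * γ + α * γ) + 2 * (α * β * γ)) := by
  obtain ⟨h0, h1, h2⟩ := h
  dsimp only
  have e : ∀ k s : Fin (x + 1), exc (x : ℝ) k s = (if k = s then (x : ℝ) + 1 else 0) - 1 := by
    intro k s; unfold exc; split_ifs <;> ring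
  set q : ℝ := (x : ℝ) + 1 with hq
  have hxq : (x : ℝ) = q - 1 := by rw [hq]; ring
  have : ∀ s : Fin (x + 1), (1 + α * exc x h0 s) * ((1 + β * exc x h1 s) *
        (1 + γ * exc x h2 s)) = (1 - α) * (1 - β) * (1 - γ) +
      ((if h0 = s then q * α * (1 - β) * (1 - γ) else 0) +
      ((if h1 = s then q * β * (1 - α) * (1 - γ) else 0) +
      ((if h2 = s then q * γ * (1 - α) * (1 - β) else 0) +
      ((if h0 = s then (if h1 = s then q ^ 2 * α * β * (1 - γ) else 0) else 0) +
      ((if h0 = s then (if h2 = s then q ^ 2 * α * γ * (1 - β) else 0) else 0) +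
      ((if h1 = s then (if h2 = s then q ^ 2 * β * γ * (1 - α) else 0) else 0) +
      (if h0 = s then (if h1 = s then (if h2 = s then q ^ 3 * α * β * γ else 0) else 0)
        else 0))))))) := by
    intro s
    simp only [e]
    split_ifs <;> ring
  simp only [this, Finset.sum_add_distrib, Finset.sum_ite_eq, Finset.mem_univ, if_true,
    Finset.sum_const, Finset.card_univ, Fintype.card_fin, nsmul_eq_mul]
  push_cast
  rw [← hq]
  by_cases h01 : h0 = h1
  · subst h01
    by_cases h02 : h0 = h2
    · subst h02; simp only [if_true]; rw [hxq]; ring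
    · have h20 : ¬ h2 = h0 := fun e => h02 e.symm
      simp only [if_true, h02, h20, if_false]; rw [hxq]; ring
  · have h10 : ¬ h1 = h0 := fun e => h01 e.symm
    by_cases h02 : h0 = h2
    · subst h02; simp only [if_true, h01, h10, if_false]; rw [hxq]; ring
    · have h20 : ¬ h2 = h0 := fun e => h02 e.symm
      by_cases h12 : h1 = h2
      · subst h12; simp only [if_true, h01, h10, if_false]; rw [hxq]; ring
      · have h21 : ¬ h2 = h1 := fun e => h12 e.symm
        simp only [h01, h10, h02, h20, h12, h21, if_false]; ring

lemma affine_le {l u k m K z : ℝ} (hl : l ≤ z) (hu : z ≤ u) (h1 : k + m * l ≤ K)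
    (h2 : k + m * u ≤ K) : k + m * z ≤ K := by
  rcases le_total 0 m with hm | hm <;> nlinarith

/-- A multi-affine function on a box is bounded by its values at the vertices. -/
lemma multiaffine_le {l u K k₀ k₁ k₂ k₃ k₁₂ k₁₃ k₂₃ k₁₂₃ : ℝ}
    (H : ∀ α β γ : ℝ, (α = l ∨ α = u) → (β = l ∨ β = u) → (γ = l ∨ γ = u) →
      k₀ + k₁ * α + k₂ * β + k₃ * γ + k₁₂ * (α * β) + k₁₃ * (α * γ) + k₂₃ * (β * γ)
        + k₁₂₃ * (α * β * γ) ≤ K)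
    {α β γ : ℝ} (hα : l ≤ α ∧ α ≤ u) (hβ : l ≤ β ∧ β ≤ u) (hγ : l ≤ γ ∧ γ ≤ u) :
    k₀ + k₁ * α + k₂ * β + k₃ * γ + k₁₂ * (α * β) + k₁₃ * (α * γ) + k₂₃ * (β * γ)
        + k₁₂₃ * (α * β * γ) ≤ K := by
  have s1 : ∀ β γ : ℝ, (β = l ∨ β = u) → (γ = l ∨ γ = u) →
      k₀ + k₁ * α + k₂ * β + k₃ * γ + k₁₂ * (α * β) + k₁₃ * (α * γ) + k₂₃ * (β * γ)
        + k₁₂₃ * (α * β * γ) ≤ K := by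
    intro β γ h2 h3
    have := affine_le (k := k₀ + k₂ * β + k₃ * γ + k₂₃ * (β * γ))
      (m := k₁ + k₁₂ * β + k₁₃ * γ + k₁₂₃ * (β * γ)) (K := K) hα.1 hα.2
      (by linarith [H l β γ (.inl rfl) h2 h3]) (by linarith [H u β γ (.inr rfl) h2 h3])
    linarith
  have s2 : ∀ γ : ℝ, (γ = l ∨ γ = u) →
      k₀ + k₁ * α + k₂ * β + k₃ * γ + k₁₂ * (α * β) + k₁₃ * (α * γ) + k₂₃ * (β * γ)
        + k₁₂₃ * (α * β * γ) ≤ K := by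
    intro γ h3
    have := affine_le (k := k₀ + k₁ * α + k₃ * γ + k₁₃ * (α * γ))
      (m := k₂ + k₁₂ * α + k₂₃ * γ + k₁₂₃ * (α * γ)) (K := K) hβ.1 hβ.2
      (by linarith [s1 l γ (.inl rfl) h3]) (by linarith [s1 u γ (.inr rfl) h3])
    linarith
  have := affine_le (k := k₀ + k₁ * α + k₂ * β + k₁₂ * (α * β))
      (m := k₃ + k₁₃ * α + k₂₃ * β + k₁₂₃ * (α * β)) (K := K) hγ.1 hγ.2
      (by linarith [s2 l (.inl rfl)]) (by linarith [s2 u (.inr rfl)])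
  linarith

section bounds

variable {x α β γ : ℝ}

lemma bound_all_eq (hx : 2 ≤ x) (hα : -(1 / x) ≤ α ∧ α ≤ 1 / x ^ 2)
    (hβ : -(1 / x) ≤ β ∧ β ≤ 1 / x ^ 2) (hγ : -(1 / x) ≤ γ ∧ γ ≤ 1 / x ^ 2) :
    1 + x * (α * β + β * γ + α * γ) + x * (x - 1) * (α * β * γ) ≤ 1 + 2 / x + 1 / x ^ 2 := by
  have := multiaffine_le (l := -(1 / x)) (u := 1 / x ^ 2) (K := 1 + 2 / x + 1 / x ^ 2)
    (k₀ := 1) (k₁ := 0) (k₂ := 0) (k₃ := 0) (k₁₂ := x) (k₁₃ := x) (k₂₃ := x)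
    (k₁₂₃ := x * (x - 1)) ?_ hα hβ hγ
  · linarith
  · obtain ⟨y, hy, rfl⟩ : ∃ y : ℝ, 0 ≤ y ∧ x = 2 + y := ⟨x - 2, by linarith, by ring⟩
    rintro α β γ (rfl | rfl) (rfl | rfl) (rfl | rfl) <;>
    · rw [← sub_nonneg]
      field_simp
      ring_nf
      positivity

lemma bound_two_eq (hx : 2 ≤ x) (hα : -(1 / x) ≤ α ∧ α ≤ 1 / x ^ 2)
    (hβ : -(1 / x) ≤ β ∧ β ≤ 1 / x ^ 2) (hγ : -(1 / x) ≤ γ ∧ γ ≤ 1 / x ^ 2) :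
    1 + x * (α * β) - γ * (α + β) - (x - 1) * (α * β * γ) ≤
      1 + 1 / x + 1 / x ^ 3 + 1 / x ^ 4 := by
  have := multiaffine_le (l := -(1 / x)) (u := 1 / x ^ 2) (K := 1 + 1 / x + 1 / x ^ 3 + 1 / x ^ 4)
    (k₀ := 1) (k₁ := 0) (k₂ := 0) (k₃ := 0) (k₁₂ := x) (k₁₃ := -1) (k₂₃ := -1)
    (k₁₂₃ := -(x - 1)) ?_ hα hβ hγ
  · linarith
  · obtain ⟨y, hy, rfl⟩ : ∃ y : ℝ, 0 ≤ y ∧ x = 2 + y := ⟨x - 2, by linarith, by ring⟩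
    rintro α β γ (rfl | rfl) (rfl | rfl) (rfl | rfl) <;>
    · rw [← sub_nonneg]
      field_simp
      ring_nf
      positivity

lemma bound_distinct (hx : 2 ≤ x) (hα : -(1 / x) ≤ α ∧ α ≤ 1 / x ^ 2)
    (hβ : -(1 / x) ≤ β ∧ β ≤ 1 / x ^ 2) (hγ : -(1 / x) ≤ γ ∧ γ ≤ 1 / x ^ 2) :
    1 - (α * β + β * γ + α * γ) + 2 * (α * β * γ) ≤ 1 + 2 / x ^ 2 := by
  have := multiaffine_le (l := -(1 / x)) (u := 1 / x ^ 2) (K := 1 + 2 / x ^ 2)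
    (k₀ := 1) (k₁ := 0) (k₂ := 0) (k₃ := 0) (k₁₂ := -1) (k₁₃ := -1) (k₂₃ := -1)
    (k₁₂₃ := 2) ?_ hα hβ hγ
  · linarith
  · obtain ⟨y, hy, rfl⟩ : ∃ y : ℝ, 0 ≤ y ∧ x = 2 + y := ⟨x - 2, by linarith, by ring⟩
    rintro α β γ (rfl | rfl) (rfl | rfl) (rfl | rfl) <;>
    · rw [← sub_nonneg]
      field_simp
      ring_nf
      positivity

end bounds

/-- The quantity `(-1 / x) ^ k`, which measures how far the number of colourings of a path with `k`
edges depends on the colours of its ends. -/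
noncomputable def sgnInv (x : ℝ) (k : ℕ) : ℝ := (-1) ^ k / x ^ k

/-- The extremes are attained at path lengths `1` and `2`. -/
lemma sgnInv_mem {x : ℝ} (hx : 2 ≤ x) {k : ℕ} (hk : 1 ≤ k) :
    -(1 / x) ≤ sgnInv x k ∧ sgnInv x k ≤ 1 / x ^ 2 := by
  have hx0 : 0 < x := by linarith
  unfold sgnInv
  rcases Nat.even_or_odd k with he | ho
  · have h2 : 2 ≤ k := by obtain ⟨r, rfl⟩ := he; omega
    rw [he.neg_one_pow]
    refine ⟨?_, one_div_le_one_div_of_le (by positivity)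
      (pow_le_pow_right₀ (by linarith) h2)⟩
    have : 0 ≤ 1 / x := by positivity
    have : 0 ≤ 1 / x ^ k := by positivity
    linarith
  · rw [ho.neg_one_pow, neg_div]
    refine ⟨neg_le_neg (one_div_le_one_div_of_le hx0 (le_self_pow₀ (by linarith) (by omega))), ?_⟩
    have : 0 ≤ 1 / x ^ 2 := by positivity
    have : 0 ≤ 1 / x ^ k := by positivity
    linarith

lemma card_pathCol_le' {x : ℕ} (hx : 2 ≤ x) {k : ℕ} (hk : 1 ≤ k) (h s : Fin (x + 1)) :
    (Nat.card (PathCol (x + 1) (k - 1) h s) : ℝ) ≤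
      (x : ℝ) ^ k / ((x : ℝ) + 1) * (1 + sgnInv x k * exc x h s) := by
  have hx0 : (0 : ℝ) < x := by exact_mod_cast (by omega : 0 < x)
  have := card_pathCol_le x (k - 1) h s
  rw [Nat.sub_add_cancel hk] at this
  have e : (x : ℝ) ^ k / ((x : ℝ) + 1) * (1 + sgnInv x k * exc x h s) =
      ((x : ℝ) ^ k + (-1) ^ k * exc (x : ℝ) h s) / ((x : ℝ) + 1) := by
    unfold sgnInv; field_simp
  rw [e, le_div_iff₀ (by positivity)]
  linarith

lemma sum_spoke_le {x : ℕ} (hx : 2 ≤ x) {a b c : ℕ} (ha : 1 ≤ a) (hb : 1 ≤ b) (hc : 1 ≤ c)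
    (h : Fin (x + 1) × Fin (x + 1) × Fin (x + 1)) :
    ∑ s : Fin (x + 1), (Nat.card (PathCol (x + 1) (a - 1) h.1 s) : ℝ) *
      ((Nat.card (PathCol (x + 1) (b - 1) h.2.1 s) : ℝ) *
        (Nat.card (PathCol (x + 1) (c - 1) h.2.2 s) : ℝ)) ≤
    (x : ℝ) ^ (a + b + c) / ((x : ℝ) + 1) ^ 2 *
      hubFactor (1 + 2 / (x : ℝ) + 1 / (x : ℝ) ^ 2)
        (1 + 1 / (x : ℝ) + 1 / (x : ℝ) ^ 3 + 1 / (x : ℝ) ^ 4) (1 + 2 / (x : ℝ) ^ 2) h := by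
  have hx2 : (2 : ℝ) ≤ x := by exact_mod_cast hx
  have hα := sgnInv_mem hx2 ha
  have hβ := sgnInv_mem hx2 hb
  have hγ := sgnInv_mem hx2 hc
  calc _ ≤ ∑ s : Fin (x + 1), ((x : ℝ) ^ a / ((x : ℝ) + 1) * (1 + sgnInv x a * exc x h.1 s)) *
        (((x : ℝ) ^ b / ((x : ℝ) + 1) * (1 + sgnInv x b * exc x h.2.1 s)) *
        ((x : ℝ) ^ c / ((x : ℝ) + 1) * (1 + sgnInv x c * exc x h.2.2 s))) := by
        refine Finset.sum_le_sum fun s _ => ?_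
        have h1 := card_pathCol_le' hx ha h.1 s
        have h2 := card_pathCol_le' hx hb h.2.1 s
        have h3 := card_pathCol_le' hx hc h.2.2 s
        have p1 := (Nat.cast_nonneg _).trans h1
        have p2 := (Nat.cast_nonneg _).trans h2
        exact mul_le_mul h1 (mul_le_mul h2 h3 (Nat.cast_nonneg _) p2) (by positivity) p1
    _ = (x : ℝ) ^ (a + b + c) / ((x : ℝ) + 1) ^ 3 * ∑ s : Fin (x + 1),
          (1 + sgnInv x a * exc x h.1 s) * ((1 + sgnInv x b * exc x h.2.1 s) *
            (1 + sgnInv x c * exc x h.2.2 s)) := by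
        rw [Finset.mul_sum]
        refine Finset.sum_congr rfl fun s _ => ?_
        rw [pow_add, pow_add]
        field_simp
    _ ≤ (x : ℝ) ^ (a + b + c) / ((x : ℝ) + 1) ^ 3 * (((x : ℝ) + 1) *
          hubFactor (1 + 2 / (x : ℝ) + 1 / (x : ℝ) ^ 2)
          (1 + 1 / (x : ℝ) + 1 / (x : ℝ) ^ 3 + 1 / (x : ℝ) ^ 4) (1 + 2 / (x : ℝ) ^ 2) h) := by
        rw [sum_spoke]
        refine mul_le_mul_of_nonneg_left (mul_le_mul_of_nonneg_left ?_ (by positivity))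
          (by positivity)
        unfold hubFactor
        split_ifs
        · exact bound_all_eq hx2 hα hβ hγ
        · exact bound_two_eq hx2 hα hβ hγ
        · linarith [bound_two_eq hx2 hα hγ hβ]
        · linarith [bound_two_eq hx2 hβ hγ hα]
        · exact bound_distinct hx2 hα hβ hγ
    _ = _ := by field_simp

lemma hubFactor_pow {q : ℕ} (A B D : ℝ) (t : ℕ) (h : Fin q × Fin q × Fin q) :
    hubFactor A B D h ^ t = hubFactor (A ^ t) (B ^ t) (D ^ t) h := by
  unfold hubFactor; split_ifs <;> rfl

/-! ### Assembling the bound -/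

/-- **Lemma 4.7.**  For `t ≥ 1` and positive path sizes `a i, b i, c i`, let
`G = G(a,b,c)` be the corresponding subdivision of `K_{3,t}`, of order
`n = ∑ i, (a i + b i + c i) - 2t + 3`, and let
`F(x,t) = 3(1 + 1/x + 1/x³ + 1/x⁴)^t + (1/x)(1 + 2/x + 1/x²)^t + (x-1)(1 + 2/x²)^t`.
Then for every natural number `x ≥ 2`,
`(x+1)^(2t-1) · π(G, x+1) ≤ x^(n+2t-2) · F(x,t)` as real numbers. -/
theorem statement_12 (t : ℕ) (ht : 1 ≤ t) (a b c : Fin t → ℕ)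
    (ha : ∀ i, 1 ≤ a i) (hb : ∀ i, 1 ≤ b i) (hc : ∀ i, 1 ≤ c i)
    (n : ℕ) (hn : n = (∑ i, (a i + b i + c i)) - 2*t + 3)
    (x : ℕ) (hx : 2 ≤ x) :
    ((x : ℝ) + 1) ^ (2*t - 1) * (chromPoly (k3tGraph t a b c) (x + 1) : ℝ) ≤
      (x : ℝ) ^ (n + 2*t - 2) *
        (3 * (1 + 1/(x:ℝ) + 1/(x:ℝ)^3 + 1/(x:ℝ)^4) ^ t
          + (1/(x:ℝ)) * (1 + 2/(x:ℝ) + 1/(x:ℝ)^2) ^ t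
          + ((x:ℝ) - 1) * (1 + 2/(x:ℝ)^2) ^ t) := by
  have hx0 : (0 : ℝ) < x := by exact_mod_cast (by omega : 0 < x)
  set A : ℝ := 1 + 2 / (x : ℝ) + 1 / (x : ℝ) ^ 2 with hA
  set B : ℝ := 1 + 1 / (x : ℝ) + 1 / (x : ℝ) ^ 3 + 1 / (x : ℝ) ^ 4 with hB
  set D : ℝ := 1 + 2 / (x : ℝ) ^ 2 with hD
  set S : ℕ := ∑ i, (a i + b i + c i) with hS
  have hcount : (chromPoly (k3tGraph t a b c) (x + 1) : ℝ) ≤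
      (x : ℝ) ^ S / ((x : ℝ) + 1) ^ (2 * t) *
        (((x : ℝ) + 1) * (A ^ t + 3 * x * B ^ t + x * (x - 1) * D ^ t)) := by
    have h0 := chromPoly_le t a b c ha hb hc (x + 1)
    have h1 : (chromPoly (k3tGraph t a b c) (x + 1) : ℝ) ≤
        ∑ h : Fin (x + 1) × Fin (x + 1) × Fin (x + 1), ∏ i, ∑ s : Fin (x + 1),
          (Nat.card (PathCol (x + 1) (a i - 1) h.1 s) : ℝ) *
          ((Nat.card (PathCol (x + 1) (b i - 1) h.2.1 s) : ℝ) *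
            (Nat.card (PathCol (x + 1) (c i - 1) h.2.2 s) : ℝ)) := by exact_mod_cast h0
    refine h1.trans ?_
    rw [← sum_hubFactor, Finset.mul_sum]
    refine Finset.sum_le_sum fun h _ => ?_
    calc _ ≤ ∏ i, (x : ℝ) ^ (a i + b i + c i) / ((x : ℝ) + 1) ^ 2 * hubFactor A B D h :=
          Finset.prod_le_prod (fun i _ => Finset.sum_nonneg fun s _ => by positivity)
            (fun i _ => sum_spoke_le hx (ha i) (hb i) (hc i) h)
      _ = _ := by
          rw [Finset.prod_mul_distrib, Finset.prod_div_distrib, Finset.prod_pow_eq_pow_sum]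
          simp only [Finset.prod_const, Finset.card_univ, Fintype.card_fin]
          rw [← pow_mul, hubFactor_pow]
  have hS3 : 3 * t ≤ S := by
    have : ∑ _i : Fin t, 3 ≤ S :=
      Finset.sum_le_sum fun i _ => by have := ha i; have := hb i; have := hc i; omega
    simpa [mul_comm] using this
  -- The hypothesis on `n` makes the truncated exponent `n + 2t - 2` equal to `S + 1`.
  have hexp : n + 2 * t - 2 = S + 1 := by omega
  rw [hexp]
  have hq : ((x : ℝ) + 1) ^ (2 * t) = ((x : ℝ) + 1) ^ (2 * t - 1) * ((x : ℝ) + 1) := by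
    rw [← pow_succ]; congr 1; omega
  calc _ ≤ ((x : ℝ) + 1) ^ (2 * t - 1) * ((x : ℝ) ^ S / ((x : ℝ) + 1) ^ (2 * t) *
        (((x : ℝ) + 1) * (A ^ t + 3 * x * B ^ t + x * (x - 1) * D ^ t))) := by gcongr
    _ = _ := by
      rw [hq, pow_succ (x : ℝ) S]
      clear_value A B D
      field_simp
      ring
end

section
/- Let G be a connected finite simple graph in which every edge lies on at most one cycle (a cactus graph), whose distinct cycles are C_1, …, C_p (p ≥ 1) with n_i vertices in C_i, and which has exactly t edges lying on no cycle. Then for every natural number x, the following identity holds in the integers: x^(p−1)·π(G,x) = (x−1)^(t+p)·Π_{i=1}^p ( (x−1)^(n_i−1) + (−1)^(n_i) ). -/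
/-!
Take the colors in a finite abelian group `A` of order `x`. A proper coloring `f` of a connected
graph is determined by the color of one vertex and its *tension*, the nowhere-zero antisymmetric
function `f b - f a` on oriented edges. An antisymmetric function is a tension exactly when its sum
around every cycle is zero (`exists_potential`). In a cactus the cycles are edge-disjoint, so these
conditions are independent of each other: a nowhere-zero tension is a free choice of a nonzero
element on each of the `t` edges off the cycles and, for each cycle, a sequence of `nᵢ` nonzero
elements with sum zero (`card_colorings`). If `N n` is the number of such sequences of length `n`,
then `N n + N (n + 1) = (x - 1) ^ n`, whence `x * N n = (x - 1) ^ n + (-1) ^ n * (x - 1)`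
(`card_zeroSum`). Thus `π(G, x) = x * (x - 1) ^ t * ∏ N nᵢ`, and multiplying by `x ^ (p - 1)` gives
each of the `p` factors `N nᵢ` its own factor `x`.
-/

open SimpleGraph Finset

/-! ### Potentials and tensions -/

/-- Telescoping: the increments of a potential `f` along a walk add up to the difference of its
values at the two ends. -/
lemma sum_darts_sub {V A : Type} [AddCommGroup A] {G : SimpleGraph V} (f : V → A) {a b : V}
    (q : G.Walk a b) : (q.darts.map fun d => f d.snd - f d.fst).sum = f b - f a := by
  induction q with
  | nil => simp
  | cons h q ih => simp [ih]

/-- On a tree every antisymmetric function `g` is the difference of a potential, namely the sum of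
`g` along the path from a fixed root. -/
lemma tree_potential {V A : Type} [AddCommGroup A] {T : SimpleGraph V} (hT : T.IsTree)
    (g : V → V → A) (hg : ∀ a b, g b a = -g a b) :
    ∃ f : V → A, ∀ a b, T.Adj a b → f b - f a = g a b := by
  obtain ⟨r⟩ := hT.1.nonempty
  choose P hP _ using fun v => hT.existsUnique_path r v
  refine ⟨fun v => ((P v).darts.map fun d => g d.fst d.snd).sum, fun a b hab => ?_⟩
  by_cases ha : a ∈ (P b).support
  · simp [hT.2.path_concat (hP a) (hP b) hab ha, Walk.darts_concat]
  · have hb := hT.2.mem_support_of_ne_mem_support_of_adj_of_isPath (hP a) (hP b) hab ha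
    simp [hT.2.path_concat (hP b) (hP a) hab.symm hb, Walk.darts_concat, hg a b]

/-- If every cycle of a connected graph has the same edges as one of the cycle walks `w i`, then
an antisymmetric function whose sum along every `w i` vanishes is the difference of a potential.
A potential is first found on a spanning tree; an edge off the tree closes a cycle all
of whose other edges are in the tree, so the remaining error on that edge vanishes as well. -/
lemma exists_potential {V A ι : Type} [AddCommGroup A] {G : SimpleGraph V} (hconn : G.Connected)
    (u : ι → V) (w : ∀ i, G.Walk (u i) (u i)) (hcyc : ∀ i, (w i).IsCycle)
    (hall : ∀ (v : V) (q : G.Walk v v), q.IsCycle →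
      ∃ i, ∀ e, e ∈ q.edges ↔ e ∈ (w i).edges)
    (g : V → V → A) (hg : ∀ a b, g b a = -g a b)
    (hsum : ∀ i, ((w i).darts.map fun d => g d.fst d.snd).sum = 0) :
    ∃ f : V → A, ∀ a b, G.Adj a b → f b - f a = g a b := by
  classical
  obtain ⟨T, hTG, hT⟩ := hconn.exists_isTree_le
  obtain ⟨f, hf⟩ := tree_potential hT g hg
  refine ⟨f, fun a b hab => ?_⟩
  by_cases hTab : T.Adj a b
  · exact hf a b hTab
  obtain ⟨P, hP, -⟩ := hT.existsUnique_path b a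
  -- The fundamental cycle of the edge `ab`.
  have hPT : ∀ e ∈ (P.mapLe hTG).edges, e ∈ T.edgeSet := by
    intro e he
    rw [Walk.edges_mapLe_eq_edges] at he
    exact P.edges_subset_edgeSet he
  have hC : (Walk.cons hab (P.mapLe hTG)).IsCycle := by
    rw [Walk.cons_isCycle_iff]
    exact ⟨hP.mapLe hTG, fun h => hTab (hPT _ h)⟩
  obtain ⟨i, hi⟩ := hall _ _ hC
  have hmem : s(a, b) ∈ (w i).edges := (hi _).1 (by simp)
  obtain ⟨d, hd, hde⟩ := List.mem_map.1 hmem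
  set F : G.Dart → A := fun d => g d.fst d.snd - (f d.snd - f d.fst) with hF
  have hF0 : ((w i).darts.map F).sum = 0 := by
    have hsub (l : List G.Dart) : (l.map F).sum =
        (l.map fun d => g d.fst d.snd).sum - (l.map fun d => f d.snd - f d.fst).sum := by
      induction l with
      | nil => simp
      | cons d l ih =>
        rw [List.map_cons, List.sum_cons, ih, List.map_cons, List.sum_cons, List.map_cons,
          List.sum_cons, add_sub_add_comm]
    rw [hsub, hsum, sum_darts_sub, sub_self, sub_self]
  have hnd : ((w i).darts.map Dart.edge).Nodup := (hcyc i).1.1.edges_nodup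
  have hother : ∀ d' ≠ d, d' ∈ (w i).darts → F d' = 0 := by
    intro d' hne hd'
    have h1 : d'.edge ≠ d.edge := fun h => hne (List.inj_on_of_nodup_map hnd hd' hd h)
    have h2 : d'.edge ∈ (Walk.cons hab (P.mapLe hTG)).edges :=
      (hi _).2 (List.mem_map_of_mem hd')
    rw [Walk.edges_cons, List.mem_cons] at h2
    have h3 := hPT _ (h2.resolve_left (fun h => h1 (h.trans hde.symm)))
    have h4 : T.Adj d'.fst d'.snd := h3
    simp [hF, hf _ _ h4]
  have hFd : F d = 0 := by
    rw [List.sum_map_eq_nsmul_single d F hother,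
      List.count_eq_one_of_mem (List.Nodup.of_map _ hnd) hd, one_smul] at hF0
    exact hF0
  have hFd' : f d.snd - f d.fst = g d.fst d.snd := (sub_eq_zero.1 hFd).symm
  rcases dart_edge_eq_mk'_iff'.1 hde with ⟨h1, h2⟩ | ⟨h1, h2⟩
  · rw [h1, h2] at hFd'; exact hFd'
  · rw [h1, h2] at hFd'
    rw [hg b a, ← hFd', neg_sub]

/-- A potential on a connected graph is determined by its differences along edges and its value at
one vertex. -/
lemma potential_unique {V A : Type} [AddCommGroup A] {G : SimpleGraph V} (hconn : G.Connected)
    (f f' : V → A) (r : V) (hr : f r = f' r)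
    (h : ∀ a b, G.Adj a b → f b - f a = f' b - f' a) : f = f' := by
  funext v
  obtain ⟨q⟩ := hconn r v
  have h1 := sum_darts_sub f q
  have h2 := sum_darts_sub f' q
  have : (fun d : G.Dart => f d.snd - f d.fst) = fun d => f' d.snd - f' d.fst :=
    funext fun d => h _ _ d.adj
  rw [this, h2, hr] at h1
  exact (sub_left_injective h1).symm

/-- Values may be prescribed freely on oriented pairs `D j` no two of which have the same
underlying unordered pair, and extended to an antisymmetric function. -/
lemma exists_antisymm {V A J : Type} [AddCommGroup A] (D : J → V × V)
    (hD : Function.Injective fun j => s((D j).1, (D j).2)) (hne : ∀ j, (D j).1 ≠ (D j).2)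
    (h : J → A) :
    ∃ g : V → V → A, (∀ a b, g b a = -g a b) ∧ ∀ j, g (D j).1 (D j).2 = h j := by
  have hDi : Function.Injective D := fun j k hjk => hD (by simp [hjk])
  refine ⟨fun a b => Function.extend D h 0 (a, b) - Function.extend D h 0 (b, a),
    fun a b => by simp, fun j => ?_⟩
  have h1 : Function.extend D h 0 ((D j).1, (D j).2) = h j := hDi.extend_apply h 0 j
  have h2 : Function.extend D h 0 ((D j).2, (D j).1) = 0 := by
    rw [Function.extend_apply']
    · rfl
    · rintro ⟨k, hk⟩
      have hkj : k = j := hD (by simp [hk, Sym2.eq_swap])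
      subst hkj
      exact hne k (congrArg Prod.fst hk)
  simp only [h1, h2, sub_zero]

/-! ### Nonzero sequences with sum zero -/

/-- The sequences of `n` nonzero elements of `A` with sum zero: the nowhere-zero
`A`-tensions of a cycle of length `n`. -/
abbrev ZeroSum (A : Type) [AddCommGroup A] (n : ℕ) : Type :=
  {h : Fin n → A // (∀ k, h k ≠ 0) ∧ ∑ k, h k = 0}

/-- A sequence of `n` nonzero elements either sums to zero, or extends in exactly one way to a
sequence of `n + 1` nonzero elements summing to zero. -/
lemma card_zeroSum_succ (A : Type) [AddCommGroup A] [Finite A] (n : ℕ) :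
    Nat.card (ZeroSum A n) + Nat.card (ZeroSum A (n + 1)) = (Nat.card {a : A // a ≠ 0}) ^ n := by
  classical
  have e1 : ZeroSum A n ≃ {h : Fin n → {a : A // a ≠ 0} // ∑ k, (h k : A) = 0} :=
    { toFun := fun h => ⟨fun k => ⟨h.1 k, h.2.1 k⟩, h.2.2⟩
      invFun := fun h => ⟨fun k => h.1 k, fun k => (h.1 k).2, h.2⟩
      left_inv := fun h => rfl
      right_inv := fun h => rfl }
  have e2 : ZeroSum A (n + 1) ≃ {h : Fin n → {a : A // a ≠ 0} // ¬ ∑ k, (h k : A) = 0} :=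
    { toFun := fun h => ⟨fun k => ⟨h.1 k.castSucc, h.2.1 _⟩, fun h0 => h.2.1 (Fin.last n) (by
        have := h.2.2
        rw [Fin.sum_univ_castSucc] at this
        simpa [h0] using this)⟩
      invFun := fun h => ⟨Fin.snoc (α := fun _ => A) (fun k => (h.1 k : A)) (-∑ k, (h.1 k : A)), by
        refine ⟨fun k => ?_, by simp [Fin.sum_univ_castSucc]⟩
        refine Fin.lastCases ?_ (fun k => ?_) k
        · simpa using h.2
        · simpa using (h.1 k).2⟩
      left_inv := fun h => by
        apply Subtype.ext
        funext k
        have := h.2.2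
        rw [Fin.sum_univ_castSucc] at this
        refine Fin.lastCases ?_ (fun k => ?_) k
        · simpa using (eq_neg_of_add_eq_zero_right this).symm
        · simp
      right_inv := fun h => by
        apply Subtype.ext
        funext k
        simp }
  rw [Nat.card_congr e1, Nat.card_congr e2, ← Nat.card_sum,
    Nat.card_congr (Equiv.sumCompl fun h : Fin n → {a : A // a ≠ 0} => ∑ k, (h k : A) = 0),
    Nat.card_fun, Nat.card_fin]

lemma card_nonzero (A : Type) [AddCommGroup A] [Finite A] :
    (Nat.card {a : A // a ≠ 0} : ℤ) = (Nat.card A : ℤ) - 1 := by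
  classical
  have := Fintype.ofFinite A
  have h := Fintype.card_subtype_compl (fun a : A => a = 0)
  have h1 : 0 < Fintype.card A := Fintype.card_pos
  simp only [Fintype.card_subtype_eq] at h
  rw [Nat.card_eq_fintype_card, Nat.card_eq_fintype_card, h]
  omega

lemma card_zeroSum (A : Type) [AddCommGroup A] [Finite A] (n : ℕ) :
    (Nat.card A : ℤ) * Nat.card (ZeroSum A n) =
      ((Nat.card A : ℤ) - 1) ^ n + (-1) ^ n * ((Nat.card A : ℤ) - 1) := by
  induction n with
  | zero => simp [ZeroSum]
  | succ n ih =>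
    have h := card_zeroSum_succ A n
    have h' : (Nat.card (ZeroSum A n) : ℤ) + Nat.card (ZeroSum A (n + 1)) =
        ((Nat.card A : ℤ) - 1) ^ n := by
      rw [← card_nonzero]; exact_mod_cast h
    rw [eq_sub_of_add_eq' h', mul_sub, ih]
    ring

/-! ### Colorings of a cactus -/

/-- Colorings of a cactus with colors in an abelian group `A` correspond to a color of one
vertex together with a nowhere-zero tension, that is, free nonzero values
on the edges off the cycles and
zero-sum nonzero values along each cycle. -/
lemma card_colorings {V A ι : Type} [AddCommGroup A] [Fintype ι] [Finite V]
    {G : SimpleGraph V} (hconn : G.Connected)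
    (u : ι → V) (w : ∀ i, G.Walk (u i) (u i)) (hcyc : ∀ i, (w i).IsCycle)
    (hdisj : ∀ i j, i ≠ j → ∀ e, e ∈ (w i).edges → e ∉ (w j).edges)
    (hall : ∀ (v : V) (q : G.Walk v v), q.IsCycle →
      ∃ i, ∀ e, e ∈ q.edges ↔ e ∈ (w i).edges) :
    Nat.card {f : V → A // ∀ ⦃a b : V⦄, G.Adj a b → f a ≠ f b} =
      Nat.card A * ((Nat.card {a : A // a ≠ 0}) ^
        (Nat.card {e : Sym2 V // e ∈ G.edgeSet ∧ ∀ i, e ∉ (w i).edges}) *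
        ∏ i, Nat.card (ZeroSum A (w i).length)) := by
  classical
  obtain ⟨r⟩ := hconn.nonempty
  set E := {e : Sym2 V // e ∈ G.edgeSet ∧ ∀ i, e ∉ (w i).edges} with hE
  -- Every edge gets exactly one orientation `D j`; on a cycle it is that of the walk.
  let D : E ⊕ (Σ i, Fin (w i).darts.length) → V × V :=
    Sum.elim (fun e => e.1.out) (fun k => ((w k.1).darts[k.2]).toProd)
  have hDl (e : E) : s((D (.inl e)).1, (D (.inl e)).2) = e.1 := by
    exact Quot.out_eq e.1
  have hDr (i) (k : Fin (w i).darts.length) :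
      s((D (.inr ⟨i, k⟩)).1, (D (.inr ⟨i, k⟩)).2) = ((w i).darts[k]).edge := rfl
  have hin (i) (k : Fin (w i).darts.length) : ((w i).darts[k]).edge ∈ (w i).edges :=
    List.mem_map_of_mem (List.getElem_mem _)
  have hDadj (j) : G.Adj (D j).1 (D j).2 := by
    rcases j with e | ⟨i, k⟩
    · have := e.2.1
      rw [← hDl e] at this
      exact this
    · exact ((w i).darts[k]).adj
  have hDinj : Function.Injective fun j => s((D j).1, (D j).2) := by
    rintro (e | ⟨i, k⟩) (e' | ⟨i', k'⟩) h <;> dsimp only at h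
    · rw [hDl, hDl] at h
      rw [Subtype.ext h]
    · rw [hDl, hDr] at h
      exact absurd (h ▸ hin i' k') (e.2.2 i')
    · rw [hDl, hDr] at h
      exact absurd (h ▸ hin i k) (e'.2.2 i)
    · rw [hDr, hDr] at h
      have hii : i = i' := by
        by_contra hne
        exact hdisj i i' hne _ (hin i k) (h ▸ hin i' k')
      subst hii
      have hnd : ((w i).darts.map Dart.edge).Nodup := (hcyc i).1.1.edges_nodup
      have h' := List.inj_on_of_nodup_map hnd (List.getElem_mem _) (List.getElem_mem _) h
      have h'' := (List.Nodup.of_map _ hnd).getElem_inj_iff.1 h'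
      rw [Fin.ext h'']
  have hDsurj (a b) (hab : G.Adj a b) : ∃ j, s((D j).1, (D j).2) = s(a, b) := by
    by_cases h : ∀ i, s(a, b) ∉ (w i).edges
    · exact ⟨.inl ⟨s(a, b), hab, h⟩, hDl _⟩
    · push Not at h
      obtain ⟨i, hi⟩ := h
      obtain ⟨d, hd, hde⟩ := List.mem_map.1 hi
      obtain ⟨k, hk, rfl⟩ := List.getElem_of_mem hd
      exact ⟨.inr ⟨i, ⟨k, hk⟩⟩, hde⟩
  have hDind {p : V → V → Prop} (hp : ∀ a b, p a b → p b a) (hpD : ∀ j, p (D j).1 (D j).2)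
      (a b) (hab : G.Adj a b) : p a b := by
    obtain ⟨j, hj⟩ := hDsurj a b hab
    rcases Sym2.eq_iff.1 hj with ⟨h1, h2⟩ | ⟨h1, h2⟩
    · rw [← h1, ← h2]; exact hpD j
    · rw [← h1, ← h2]; exact hp _ _ (hpD j)
  have hwsum (i) (F : G.Dart → A) :
      ((w i).darts.map F).sum = ∑ k : Fin (w i).darts.length, F (w i).darts[k] := by
    exact (Fin.sum_univ_fun_getElem (w i).darts F).symm
  let Φ : {f : V → A // ∀ ⦃a b : V⦄, G.Adj a b → f a ≠ f b} →
      A × ((E → {a : A // a ≠ 0}) × (∀ i, ZeroSum A (w i).darts.length)) := fun f =>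
    (f.1 r, fun e => ⟨f.1 (D (.inl e)).2 - f.1 (D (.inl e)).1,
        sub_ne_zero.2 (f.2 (hDadj (.inl e))).symm⟩,
      fun i => ⟨fun k => f.1 (D (.inr ⟨i, k⟩)).2 - f.1 (D (.inr ⟨i, k⟩)).1,
        fun k => sub_ne_zero.2 (f.2 (hDadj (.inr ⟨i, k⟩))).symm, by
          have h1 := sum_darts_sub f.1 (w i)
          rw [hwsum, sub_self] at h1
          exact h1⟩)
  have hΦ : Function.Bijective Φ := by
    constructor
    · intro f f' h
      simp only [Φ, Prod.mk.injEq] at h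
      obtain ⟨h0, h1, h2⟩ := h
      apply Subtype.ext
      refine potential_unique hconn _ _ r h0 (hDind ?_ ?_)
      · intro a b h
        rw [← neg_sub, h, neg_sub]
      · rintro (e | ⟨i, k⟩)
        · exact congrArg Subtype.val (congrFun h1 e)
        · exact congrFun (congrArg Subtype.val (congrFun h2 i)) k
    · rintro ⟨c, h1, h2⟩
      obtain ⟨g, hg, hgD⟩ := exists_antisymm D hDinj (fun j => (hDadj j).ne)
        (Sum.elim (fun e => (h1 e).1) (fun k => (h2 k.1).1 k.2))
      obtain ⟨f, hf⟩ := exists_potential hconn u w hcyc hall g hg (fun i => by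
        rw [hwsum, ← (h2 i).2.2]
        exact Finset.sum_congr rfl fun k _ => hgD (.inr ⟨i, k⟩))
      have hfD (j) := (hf _ _ (hDadj j)).trans (hgD j)
      refine ⟨⟨fun v => f v + (c - f r), fun a b hab => ?_⟩, ?_⟩
      · revert a b
        apply hDind
        · exact fun a b h => h.symm
        · intro j hj
          have h0 := hfD j
          rw [add_right_cancel hj, sub_self] at h0
          rcases j with e | ⟨i, k⟩
          · exact (h1 e).2 h0.symm
          · exact (h2 i).2.1 k h0.symm
      · refine Prod.ext ?_ (Prod.ext ?_ ?_)
        · simp [Φ]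
        · funext e
          apply Subtype.ext
          simpa [Φ] using hfD (.inl e)
        · funext i
          apply Subtype.ext
          funext k
          simpa [Φ] using hfD (.inr ⟨i, k⟩)
  rw [Nat.card_congr (Equiv.ofBijective Φ hΦ), Nat.card_prod, Nat.card_prod, Nat.card_fun,
    Nat.card_pi]
  simp only [Walk.length_darts]

/-- **Lemma 4.8.**  Let `G` be a connected cactus graph whose distinct cycles are
`C₁, …, C_p` (`p ≥ 1`), given as pairwise edge-disjoint cycle walks `w i` such that every
cycle of `G` has the same edge set as one of them, where `C i` has `n i` vertices
(equivalently, `n i` edges), and suppose `G` has exactly `t` edges lying on no cycle.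
Then for every natural number `x`,
`x^(p-1) · π(G,x) = (x-1)^(t+p) · ∏ᵢ ((x-1)^(nᵢ-1) + (-1)^(nᵢ))`
as an identity in the integers. -/
theorem statement_13 {V : Type} [Fintype V] (G : SimpleGraph V) (hconn : G.Connected)
    (p : ℕ) (hp : 1 ≤ p) (u : Fin p → V) (w : ∀ i, G.Walk (u i) (u i))
    (hcyc : ∀ i, (w i).IsCycle)
    (hdisj : ∀ i j, i ≠ j → ∀ e, e ∈ (w i).edges → e ∉ (w j).edges)
    (hall : ∀ (v : V) (q : G.Walk v v), q.IsCycle →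
      ∃ i, ∀ e, e ∈ q.edges ↔ e ∈ (w i).edges)
    (n : Fin p → ℕ) (hn : ∀ i, n i = (w i).length)
    (t : ℕ) (ht : t = Nat.card {e : Sym2 V // e ∈ G.edgeSet ∧ ∀ i, e ∉ (w i).edges})
    (x : ℕ) :
    (x : ℤ) ^ (p - 1) * (chromPoly G x : ℤ) =
      ((x : ℤ) - 1) ^ (t + p) * ∏ i, (((x : ℤ) - 1) ^ (n i - 1) + (-1) ^ (n i)) := by
  have hlen (i) : 1 ≤ (w i).length := by have := (hcyc i).three_le_length; omega
  have hN (i) (y : ℤ) : (y - 1) ^ (n i) + (-1) ^ (n i) * (y - 1) =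
      (y - 1) * ((y - 1) ^ (n i - 1) + (-1) ^ (n i)) := by
    obtain ⟨m, hm⟩ := Nat.exists_eq_add_of_le' ((hn i).symm ▸ hlen i)
    rw [hm, Nat.add_sub_cancel]
    ring
  rcases Nat.eq_zero_or_pos x with rfl | hx
  · -- There is no group of order `0`, but then both sides vanish.
    obtain ⟨r⟩ := hconn.nonempty
    have h1 : chromPoly G 0 = 0 := by
      have : IsEmpty {f : V → Fin 0 // ∀ ⦃u v : V⦄, G.Adj u v → f u ≠ f v} :=
        ⟨fun f => (f.1 r).elim0⟩
      exact Nat.card_of_isEmpty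
    have h2 : ∏ i, ((((0 : ℕ) : ℤ) - 1) ^ (n i - 1) + (-1) ^ (n i)) = 0 := by
      refine Finset.prod_eq_zero (Finset.mem_univ (⟨0, hp⟩ : Fin p)) ?_
      have := hN ⟨0, hp⟩ 0
      simp at this ⊢
      linarith
    rw [h1, h2]
    simp
  · have : NeZero x := ⟨hx.ne'⟩
    have hA : Nat.card (Fin x) = x := by simp
    have key := card_colorings (A := Fin x) hconn u w hcyc hdisj hall
    rw [← ht] at key
    have hchrom : (chromPoly G x : ℤ) =
        x * (((x : ℤ) - 1) ^ t * ∏ i, (Nat.card (ZeroSum (Fin x) (n i)) : ℤ)) := by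
      have hz := card_nonzero (Fin x)
      rw [hA] at hz key
      rw [chromPoly, key, ← hz]
      push_cast
      simp only [hn]
    have hprod : (x : ℤ) ^ p * ∏ i, (Nat.card (ZeroSum (Fin x) (n i)) : ℤ) =
        ((x : ℤ) - 1) ^ p * ∏ i, (((x : ℤ) - 1) ^ (n i - 1) + (-1) ^ (n i)) := by
      have hpow (y : ℤ) : y ^ p = ∏ _i : Fin p, y := by simp
      rw [hpow, hpow, ← Finset.prod_mul_distrib, ← Finset.prod_mul_distrib]
      refine Finset.prod_congr rfl fun i _ => ?_
      have := card_zeroSum (Fin x) (n i)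
      rw [hA] at this
      rw [this, hN]
    calc (x : ℤ) ^ (p - 1) * (chromPoly G x : ℤ)
        = ((x : ℤ) - 1) ^ t * (x ^ (p - 1 + 1) *
            ∏ i, (Nat.card (ZeroSum (Fin x) (n i)) : ℤ)) := by
          rw [hchrom]; ring
      _ = _ := by
          rw [Nat.sub_add_cancel hp, hprod]; ring
end

section
/- Let p and N_1, …, N_p be positive integers with each N_i ≥ 3, and set N = Σ_{i=1}^p N_i. Then for every real number x ≥ 1: Π_{i=1}^p (x^(N_i) + 1) ≤ x^(N−3p)·(x + 1/(3x^2))^(3p). -/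
/-!
The inequality holds factor by factor. Since `x ≥ 1`,
`x ^ n + 1 ≤ x ^ (n - 3) * (x ^ 3 + 1)`, and `a = 1 / (3 * x ^ 2)` is chosen so that the first two
terms of the binomial expansion of `(x + a) ^ 3` are exactly `x ^ 3 + 1`. Multiplying over the
factors, the exponents `N i - 3` add up to `∑ i, N i - 3 * p`.
-/

theorem pow_add_one_le_factor {n : ℕ} (hn : 3 ≤ n) {x : ℝ} (hx : 1 ≤ x) :
    x ^ n + 1 ≤ x ^ (n - 3) * (x + 1 / (3 * x ^ 2)) ^ 3 := by
  have h0 : 0 < x := by linarith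
  have h1 : 1 ≤ x ^ (n - 3) := one_le_pow₀ hx
  have hcube : x ^ 3 + 1 ≤ (x + 1 / (3 * x ^ 2)) ^ 3 := by
    have ha : 0 < 1 / (3 * x ^ 2) := by positivity
    have hlin : 3 * x ^ 2 * (1 / (3 * x ^ 2)) = 1 := by field_simp
    generalize 1 / (3 * x ^ 2) = a at ha hlin ⊢
    have hrest : 0 ≤ 3 * x * a ^ 2 + a ^ 3 := by positivity
    linarith [show (x + a) ^ 3 = x ^ 3 + 3 * x ^ 2 * a + (3 * x * a ^ 2 + a ^ 3) by ring]
  calc x ^ n + 1 ≤ x ^ n + x ^ (n - 3) := by gcongr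
    _ = x ^ (n - 3) * (x ^ 3 + 1) := by
        rw [mul_add, ← pow_add, Nat.sub_add_cancel hn, mul_one]
    _ ≤ _ := by gcongr

/-- **Lemma 4.9.**  Let `p` and `N₁, …, N_p` be positive integers with each `Nᵢ ≥ 3`
and `N = ∑ᵢ Nᵢ`.  Then for every real number `x ≥ 1`,
`∏ᵢ (x^(Nᵢ) + 1) ≤ x^(N - 3p) · (x + 1/(3x²))^(3p)`. -/
theorem statement_14 (p : ℕ) (hp : 1 ≤ p) (N : Fin p → ℕ) (hN : ∀ i, 3 ≤ N i)
    (x : ℝ) (hx : 1 ≤ x) :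
    ∏ i, (x ^ (N i) + 1) ≤ x ^ ((∑ i, N i) - 3*p) * (x + 1/(3*x^2)) ^ (3*p) := by
  have h0 : 0 < x := by linarith
  have hsum : ∑ i, (N i - 3) = (∑ i, N i) - 3 * p := by
    rw [Finset.sum_tsub_distrib _ fun i _ => hN i]
    simp [mul_comm]
  calc ∏ i, (x ^ (N i) + 1) ≤ ∏ i, (x ^ (N i - 3) * (x + 1 / (3 * x ^ 2)) ^ 3) :=
        Finset.prod_le_prod (fun i _ => by positivity) fun i _ => pow_add_one_le_factor (hN i) hx
    _ = _ := by
        rw [Finset.prod_mul_distrib, Finset.prod_pow_eq_pow_sum, hsum, Finset.prod_const,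
          Finset.card_univ, Fintype.card_fin, ← pow_mul]
end

section
/- Let p ≥ 1 and let n_1, …, n_p be integers with each n_i ≥ 3. Then for every real number x ≥ 1: 3^(3p)·x^(10p)·Π_{i=1}^p ( x^(n_i−1) + (−1)^(n_i) ) ≤ x^(Σ_{i=1}^p n_i)·(3x^3+1)^(3p). -/
/-! The inequality is the product over `i` of the one-factor inequality
`27 x^10 (x^(m-1) + (-1)^m) ≤ x^m (3x^3+1)^3`, whose left side is nonnegative for `x ≥ 1`.
Since `(3x^3+1)^3 ≥ 27x^9 + 27x^6`, the leading term `27 x^(m+9)` cancels: for odd `m` nothing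
remains to be bounded, while an even `m ≥ 3` is at least `4`, so `x^10 ≤ x^(m+6)`. -/

theorem cycle_factor_nonneg (m : ℕ) (x : ℝ) (hx : 1 ≤ x) :
    0 ≤ x ^ (m - 1) + (-1 : ℝ) ^ m := by
  have h1 : 1 ≤ x ^ (m - 1) := one_le_pow₀ hx
  rcases neg_one_pow_eq_or ℝ m with h | h <;> rw [h] <;> linarith

theorem cycle_factor_le (m : ℕ) (hm : 3 ≤ m) (x : ℝ) (hx : 1 ≤ x) :
    (3 : ℝ) ^ 3 * x ^ 10 * (x ^ (m - 1) + (-1 : ℝ) ^ m) ≤ x ^ m * (3 * x ^ 3 + 1) ^ 3 := by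
  have hx0 : 0 ≤ x := by linarith
  have hsplit : x ^ m = x * x ^ (m - 1) := by
    rw [← pow_succ', Nat.sub_add_cancel (by omega)]
  have hexp : x ^ m * (3 * x ^ 3 + 1) ^ 3
      = 27 * x ^ 10 * x ^ (m - 1) + 27 * x ^ (m + 6) + x ^ m * (9 * x ^ 3 + 1) := by
    rw [pow_add, hsplit]; ring
  have hrest : 0 ≤ x ^ m * (9 * x ^ 3 + 1) := by positivity
  have hsign : x ^ 10 * (-1 : ℝ) ^ m ≤ x ^ (m + 6) := by
    rcases Nat.even_or_odd m with h | h
    · have h4 : 4 ≤ m := by obtain ⟨k, hk⟩ := h; omega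
      rw [h.neg_one_pow, mul_one]
      exact pow_le_pow_right₀ hx (by omega)
    · rw [h.neg_one_pow]
      have h1 : 0 ≤ x ^ 10 := by positivity
      have h2 : 0 ≤ x ^ (m + 6) := by positivity
      linarith
  rw [hexp]
  linarith

/-- Numerical core of **Lemma 4.10**.  Let `p ≥ 1` and let `n₁, …, n_p` be integers with
each `nᵢ ≥ 3`.  Then for every real number `x ≥ 1`,
`3^(3p) · x^(10p) · ∏ᵢ (x^(nᵢ-1) + (-1)^(nᵢ)) ≤ x^(∑ᵢ nᵢ) · (3x³+1)^(3p)`. -/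
theorem statement_16 (p : ℕ) (hp : 1 ≤ p) (n : Fin p → ℕ) (hn : ∀ i, 3 ≤ n i)
    (x : ℝ) (hx : 1 ≤ x) :
    (3 : ℝ) ^ (3*p) * x ^ (10*p) * ∏ i, (x ^ (n i - 1) + (-1 : ℝ) ^ (n i))
      ≤ x ^ (∑ i, n i) * (3*x^3 + 1) ^ (3*p) := by
  have hprod : ∏ i, ((3 : ℝ) ^ 3 * x ^ 10 * (x ^ (n i - 1) + (-1 : ℝ) ^ (n i)))
      ≤ ∏ i, (x ^ (n i) * (3 * x ^ 3 + 1) ^ 3) := by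
    refine Finset.prod_le_prod (fun i _ => ?_) (fun i _ => cycle_factor_le (n i) (hn i) x hx)
    have h := cycle_factor_nonneg (n i) x hx
    have hx0 : 0 ≤ x := by linarith
    positivity
  simpa only [Finset.prod_mul_distrib, Finset.prod_const, Finset.card_univ, Fintype.card_fin,
    Finset.prod_pow_eq_pow_sum, ← pow_mul] using hprod
end

section
/- For every real number x ≥ 2.95: 3x·(x^4 + x^3 + x + 1)^10 + (x^4 + 2x^3 + x^2)^10 + x(x−1)·(x^4 + 2x^2)^10 < x^20·(x+1)^20·(x−1)·(x−2). -/
/-!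
Expanded in powers of `y = x - 59/20`, the right side minus the left side is a polynomial of degree
42 all of whose coefficients are positive, so it is positive for `y ≥ 0`.
-/

/-- The key polynomial inequality (with `t = 10`) in the proof of **Lemma 3.2**:
for every real `x ≥ 2.95`,
`3x(x⁴+x³+x+1)¹⁰ + (x⁴+2x³+x²)¹⁰ + x(x-1)(x⁴+2x²)¹⁰ < x²⁰(x+1)²⁰(x-1)(x-2)`. -/
theorem statement_17 (x : ℝ) (hx : 2.95 ≤ x) :
    3*x*(x^4 + x^3 + x + 1)^10 + (x^4 + 2*x^3 + x^2)^10 + x*(x - 1)*(x^4 + 2*x^2)^10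
      < x^20 * (x + 1)^20 * (x - 1) * (x - 2) := by
  obtain ⟨y, hy, rfl⟩ : ∃ y : ℝ, 0 ≤ y ∧ x = 59 / 20 + y :=
    ⟨x - 59 / 20, by norm_num at hx ⊢; linarith, by ring⟩
  rw [← sub_pos]
  ring_nf
  positivity
end

section
/- For every real number x ≥ 2.998: (3x^3 + 1)^18 < 3^18·x^46·(x−1)·(x−2)·(x+1)^6. -/
/-!
Put `a = 3x³`, so that `a ≥ 80`. For such `a` the binomial tail of `(a + 1)¹⁸` beyond the
`a¹⁵` term is at most `1.1` times its leading part `3060 a¹⁴` (`binomial_truncation`). Replacing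
the tail by `3366 a¹⁴` lets the common factor `3¹⁴ x⁴²` be cancelled, which leaves an inequality
of degree 12 (`reduced_ineq`). That inequality is still sharp enough near `x = 2.998`, where the
two sides of the original one almost agree: after expansion about `2.998` all coefficients of
the difference are nonnegative.
-/

/-- The factor `3366 = 1.1 * 3060` in place of `Nat.choose 18 4 = 3060` absorbs all lower-order
binomial terms once `a ≥ 80`. -/
lemma binomial_truncation (a : ℝ) (ha : 80 ≤ a) :
    (a + 1)^18 ≤ a^14 * (a^4 + 18*a^3 + 153*a^2 + 816*a + 3366) := by
  obtain ⟨s, hs, rfl⟩ : ∃ s : ℝ, 0 ≤ s ∧ a = s + 80 := ⟨a - 80, by linarith, by ring⟩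
  rw [← sub_nonneg]
  ring_nf
  positivity

/-- The degree 12 inequality that remains after cancelling `3¹⁴ x⁴²`. -/
lemma reduced_ineq (x : ℝ) (hx : 2.998 ≤ x) :
    81*x^12 + 486*x^9 + 1377*x^6 + 2448*x^3 + 3366
      < 81 * x^4 * (x - 1) * (x - 2) * (x + 1)^6 := by
  obtain ⟨t, ht, rfl⟩ : ∃ t : ℝ, 0 ≤ t ∧ x = t + 2.998 := ⟨x - 2.998, by linarith, by ring⟩
  rw [← sub_pos]
  ring_nf
  positivity

/-- The key polynomial inequality (with `p = 6`) in the proof of **Lemma 3.3**: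
for every real `x ≥ 2.998`, `(3x³+1)¹⁸ < 3¹⁸·x⁴⁶·(x-1)·(x-2)·(x+1)⁶`. -/
theorem statement_18 (x : ℝ) (hx : 2.998 ≤ x) :
    (3*x^3 + 1)^18 < 3^18 * x^46 * (x - 1) * (x - 2) * (x + 1)^6 := by
  have hx0 : 0 < x := by linarith
  have ha : 80 ≤ 3 * x^3 := by
    have h : (2.998 : ℝ)^3 ≤ x^3 := by gcongr
    norm_num at h
    linarith
  calc (3*x^3 + 1)^18
      ≤ (3*x^3)^14 * ((3*x^3)^4 + 18*(3*x^3)^3 + 153*(3*x^3)^2 + 816*(3*x^3) + 3366) :=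
        binomial_truncation _ ha
    _ = 3^14 * x^42 * (81*x^12 + 486*x^9 + 1377*x^6 + 2448*x^3 + 3366) := by ring
    _ < 3^14 * x^42 * (81 * x^4 * (x - 1) * (x - 2) * (x + 1)^6) :=
        mul_lt_mul_of_pos_left (reduced_ineq x hx) (by positivity)
    _ = 3^18 * x^46 * (x - 1) * (x - 2) * (x + 1)^6 := by ring
end

section
/- Let G = SK4^{3,4,4} be the subdivision of K_4 of order 12 in which the three edges incident to one vertex are replaced by internally disjoint paths with 3, 4 and 4 edges respectively. Then for every natural number x ≥ 3, the number of x-colorings satisfies π(G,x) > (x)↓4·(x−1)^8. -/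
/-!
Write `n = x - 1`. Fix distinct colors `e 0, e 1, e 2` of the triangle vertices and a color `a`
of `w`. Properly coloring the subdivided path of length `s` from `w` to a triangle vertex of color
`b` amounts to choosing a walk of length `s` from `a` to `b` in the complete graph on the `x`
colors. Since the adjacency matrix of that graph is `J - 1`, where `J` is the all-ones matrix,
its powers are `B s • J + (-1)^s • 1` with `B 0 = 0` and `B (s+1) = n * B s + (-1)^s`
(`walkCount`, `pow_adjMatrix_top`).

Gluing walks into colorings (`colorOfWalks`) is injective, so the number of colorings is at least
`x (x-1) (x-2) * ∑ a, (B 3 - [a = e 0]) (B 4 + [a = e 1]) (B 4 + [a = e 2])`.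
As the `e i` are distinct, the sum is `n^3 (B 4)^2 + 2 (B 3) (B 4)`, with
`B 3 = n^2 - n + 1` and `B 4 = n^3 - n^2 + n - 1`. Its expansion begins `n^9 - 2 n^8 + 3 n^7`, and
it exceeds `(n - 2) n^8` for all `n ≥ 2`.
-/


open SimpleGraph Finset

/-- The number of walks with `s` edges between two given distinct vertices of the complete graph
on `n + 1` vertices. It is integer-valued because of the signs in the recursion. -/
def walkCount (n : ℤ) : ℕ → ℤ
  | 0 => 0
  | s + 1 => n * walkCount n s + (-1) ^ s

lemma pow_adjMatrix_top (x s : ℕ) (a b : Fin x) :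
    ((⊤ : SimpleGraph (Fin x)).adjMatrix ℤ ^ s) a b
      = walkCount ((x : ℤ) - 1) s + if a = b then (-1) ^ s else 0 := by
  induction s generalizing b with
  | zero => simp [walkCount, Matrix.one_apply]
  | succ s ih =>
    have hsum : ∀ c : Fin x,
        (walkCount ((x : ℤ) - 1) s + if a = c then (-1) ^ s else 0) * (if c = b then 0 else 1)
          = walkCount ((x : ℤ) - 1) s + (if a = c then (-1) ^ s else 0)
            - (if c = b then walkCount ((x : ℤ) - 1) s + (if a = b then (-1) ^ s else 0) else 0) := by
      intro c
      by_cases h : c = b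
      · subst h; simp
      · simp [h]
    have hadj : ∀ c : Fin x, (⊤ : SimpleGraph (Fin x)).adjMatrix ℤ c b = if c = b then 0 else 1 := by
      intro c
      by_cases h : c = b <;> simp [SimpleGraph.adjMatrix_apply, h]
    rw [pow_succ, Matrix.mul_apply]
    simp only [ih, hadj, hsum, Finset.sum_sub_distrib, Finset.sum_add_distrib,
      Finset.sum_ite_eq, Finset.sum_ite_eq', Finset.mem_univ, if_true, Finset.sum_const,
      Finset.card_univ, Fintype.card_fin, nsmul_eq_mul, walkCount, pow_succ]
    split_ifs <;> ring

/-- Walks with `s` edges from `a` to `b` in the complete graph on the `x` colors, i.e. the proper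
colorings of a path with `s` edges whose ends have colors `a` and `b`. -/
abbrev ColorWalk (x s : ℕ) (a b : Fin x) : Type :=
  {p : (⊤ : SimpleGraph (Fin x)).Walk a b // p.length = s}

lemma card_colorWalk (x s : ℕ) (a b : Fin x) :
    (Fintype.card (ColorWalk x s a b) : ℤ)
      = walkCount ((x : ℤ) - 1) s + if a = b then (-1) ^ s else 0 := by
  rw [← pow_adjMatrix_top, SimpleGraph.adjMatrix_pow_apply_eq_card_walk]
  rfl

/-- The data of a proper coloring of `SK₄^{3,4,4}`: the colors `e 0, e 1, e 2` of the triangle, the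
color `a` of the vertex `w`, and the colorings of the three subdivided paths. -/
abbrev WalkData (x : ℕ) : Type :=
  Σ e : Fin 3 ↪ Fin x, Σ a : Fin x,
    ColorWalk x 3 a (e 0) × ColorWalk x 4 a (e 1) × ColorWalk x 4 a (e 2)

/-- The vertex coloring of `SK₄^{3,4,4}` assembled from the data. -/
def colorOfWalks {x : ℕ} (d : WalkData x) :
    (Fin 4 ⊕ (Fin (3-1) ⊕ Fin (4-1) ⊕ Fin (4-1))) → Fin x
  | Sum.inl i => ![d.2.1, d.1 0, d.1 1, d.1 2] i
  | Sum.inr (Sum.inl i) => d.2.2.1.1.getVert (i + 1)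
  | Sum.inr (Sum.inr (Sum.inl i)) => d.2.2.2.1.1.getVert (i + 1)
  | Sum.inr (Sum.inr (Sum.inr i)) => d.2.2.2.2.1.getVert (i + 1)

lemma ColorWalk.ne_succ {x s : ℕ} {a b : Fin x} (p : ColorWalk x s a b) {i : ℕ} (hi : i < s) :
    p.1.getVert i ≠ p.1.getVert (i + 1) :=
  (p.1.adj_getVert_succ (by rw [p.2]; exact hi)).ne

lemma ColorWalk.ne_first {x s : ℕ} {a b : Fin x} (p : ColorWalk x s a b) (hs : 0 < s) :
    a ≠ p.1.getVert 1 := by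
  simpa using p.ne_succ hs

lemma ColorWalk.ne_last {x s : ℕ} {a b : Fin x} (p : ColorWalk x (s + 1) a b) :
    b ≠ p.1.getVert s := by
  have h := p.ne_succ (Nat.lt_succ_self s)
  have hl : p.1.getVert (s + 1) = b := by
    exact p.1.getVert_of_length_le p.2.le
  rw [hl] at h
  exact h.symm

lemma colorOfWalks_ne {x : ℕ} (d : WalkData x)
    {u v : Fin 4 ⊕ (Fin (3-1) ⊕ Fin (4-1) ⊕ Fin (4-1))} (h : sk4Rel 3 4 4 u v) :
    colorOfWalks d u ≠ colorOfWalks d v := by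
  obtain ⟨e, a, p, q, r⟩ := d
  have he : ∀ i j : Fin 3, i ≠ j → e i ≠ e j := fun i j hij => e.injective.ne hij
  rcases u with u | u | u | u <;> rcases v with v | v | v | v <;>
    simp only [sk4Rel] at h
  · rcases h with ⟨rfl, rfl⟩ | ⟨rfl, rfl⟩ | ⟨rfl, rfl⟩ | h | h | h
    · exact he 0 1 (by decide)
    · exact he 0 2 (by decide)
    · exact he 1 2 (by decide)
    all_goals omega
  · rcases h with ⟨rfl, h⟩ | ⟨rfl, h⟩ <;> simp only [colorOfWalks, h]
    · exact p.ne_first (by norm_num)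
    · exact p.ne_last
  · rcases h with ⟨rfl, h⟩ | ⟨rfl, h⟩ <;> simp only [colorOfWalks, h]
    · exact q.ne_first (by norm_num)
    · exact q.ne_last
  · rcases h with ⟨rfl, h⟩ | ⟨rfl, h⟩ <;> simp only [colorOfWalks, h]
    · exact r.ne_first (by norm_num)
    · exact r.ne_last
  · simp only [colorOfWalks, h]
    exact p.ne_succ (by omega)
  · simp only [colorOfWalks, h]
    exact q.ne_succ (by omega)
  · simp only [colorOfWalks, h]
    exact r.ne_succ (by omega)

/-- A walk with a given number of edges is determined by its interior vertices. -/
lemma ColorWalk.ext_interior {x s : ℕ} {a b : Fin x} (p q : ColorWalk x s a b)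
    (h : ∀ i : Fin (s - 1), p.1.getVert (i + 1) = q.1.getVert (i + 1)) : p = q := by
  apply Subtype.ext
  apply SimpleGraph.Walk.ext_getVert
  intro k
  rcases Nat.eq_zero_or_pos k with rfl | hk
  · simp
  by_cases hks : k < s
  · have := h ⟨k - 1, by omega⟩
    simpa [Nat.sub_add_cancel hk] using this
  · rw [SimpleGraph.Walk.getVert_of_length_le _ (by rw [p.2]; omega),
      SimpleGraph.Walk.getVert_of_length_le _ (by rw [q.2]; omega)]

lemma colorOfWalks_injective (x : ℕ) : Function.Injective (colorOfWalks (x := x)) := by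
  rintro ⟨e, a, p, q, r⟩ ⟨e', a', p', q', r'⟩ h
  have ha : a = a' := congrFun h (Sum.inl 0)
  have he : e = e' := by
    ext i : 1
    fin_cases i
    · exact congrFun h (Sum.inl 1)
    · exact congrFun h (Sum.inl 2)
    · exact congrFun h (Sum.inl 3)
  subst ha he
  have hp : p = p' := p.ext_interior p' fun i => congrFun h (Sum.inr (Sum.inl i))
  have hq : q = q' := q.ext_interior q' fun i => congrFun h (Sum.inr (Sum.inr (Sum.inl i)))
  have hr : r = r' := r.ext_interior r' fun i => congrFun h (Sum.inr (Sum.inr (Sum.inr i)))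
  rw [hp, hq, hr]

lemma card_walkData_le (x : ℕ) :
    Fintype.card (WalkData x) ≤ chromPoly (sk4Graph 3 4 4) x := by
  rw [chromPoly, ← Nat.card_eq_fintype_card]
  refine Nat.card_le_card_of_injective
    (fun d : WalkData x => ⟨colorOfWalks d, fun u v huv => ?_⟩) fun d d' h => ?_
  · rcases huv.2 with h | h
    · exact colorOfWalks_ne d h
    · exact (colorOfWalks_ne d h).symm
  · exact colorOfWalks_injective x (congrArg Subtype.val h)

/-- Summing over the color `a` of `w`: no two of the three indicators are nonzero together. -/
lemma sum_indicators (x : ℕ) (e : Fin 3 ↪ Fin x) (B C : ℤ) :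
    ∑ a : Fin x, (B - if a = e 0 then 1 else 0) * ((C + if a = e 1 then 1 else 0)
        * (C + if a = e 2 then 1 else 0))
      = x * (B * C ^ 2) + 2 * (B * C) - C ^ 2 := by
  have h01 : e 0 ≠ e 1 := e.injective.ne (by decide)
  have h02 : e 0 ≠ e 2 := e.injective.ne (by decide)
  have h12 : e 1 ≠ e 2 := e.injective.ne (by decide)
  have hterm : ∀ a : Fin x, (B - if a = e 0 then 1 else 0) * ((C + if a = e 1 then 1 else 0)
        * (C + if a = e 2 then 1 else 0))
      = B * C ^ 2 + (if a = e 1 then B * C else 0) + (if a = e 2 then B * C else 0)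
        - (if a = e 0 then C ^ 2 else 0) := by
    intro a
    split_ifs <;> first | (exfalso; simp_all; done) | ring
  simp only [hterm, Finset.sum_sub_distrib, Finset.sum_add_distrib, Finset.sum_ite_eq',
    Finset.mem_univ, if_true, Finset.sum_const, Finset.card_univ, Fintype.card_fin, nsmul_eq_mul]
  ring

lemma card_walkData (n : ℕ) :
    (Fintype.card (WalkData (n + 1)) : ℤ) = ((n + 1).descFactorial 3 : ℕ)
      * (n ^ 3 * (n ^ 3 - n ^ 2 + n - 1) ^ 2
        + 2 * ((n ^ 2 - n + 1) * (n ^ 3 - n ^ 2 + n - 1))) := by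
  have h3 : walkCount n 3 = (n : ℤ) ^ 2 - n + 1 := by simp only [walkCount]; ring
  have h4 : walkCount n 4 = (n : ℤ) ^ 3 - n ^ 2 + n - 1 := by simp only [walkCount]; ring
  have hw : ∀ a b : Fin (n + 1), (Fintype.card (ColorWalk (n + 1) 3 a b) : ℤ)
      = ((n : ℤ) ^ 2 - n + 1) - if a = b then 1 else 0 := by
    intro a b
    rw [card_colorWalk, Nat.cast_succ, add_sub_cancel_right, h3]
    split_ifs <;> ring
  have hw' : ∀ a b : Fin (n + 1), (Fintype.card (ColorWalk (n + 1) 4 a b) : ℤ)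
      = ((n : ℤ) ^ 3 - n ^ 2 + n - 1) + if a = b then 1 else 0 := by
    intro a b
    rw [card_colorWalk, Nat.cast_succ, add_sub_cancel_right, h4]
    split_ifs <;> ring
  simp only [WalkData, Fintype.card_sigma, Fintype.card_prod, Nat.cast_sum, Nat.cast_mul, hw, hw',
    sum_indicators, Finset.sum_const, Finset.card_univ, Fintype.card_embedding_eq,
    Fintype.card_fin, nsmul_eq_mul]
  push_cast
  ring

/-- **Concluding remark.**  Let `G = SK₄^{3,4,4}` be the subdivision of `K₄` of order 12
in which the three edges incident to one vertex are replaced by internally disjoint paths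
with 3, 4 and 4 edges.  Then for every natural number `x ≥ 3`,
`π(G,x) > (x)↓4 · (x-1)^8`. -/
theorem statement_19 (x : ℕ) (hx : 3 ≤ x) :
    chromPoly (sk4Graph 3 4 4) x > x * (x-1) * (x-2) * (x-3) * (x-1) ^ 8 := by
  obtain ⟨m, rfl⟩ : ∃ m, x = m + 3 := ⟨x - 3, by omega⟩
  refine lt_of_lt_of_le ?_ (card_walkData_le (m + 3))
  have hcard := card_walkData (m + 2)
  have hd : (m + 2 + 1).descFactorial 3 = (m + 3) * (m + 2) * (m + 1) := by
    simp only [Nat.succ_descFactorial_succ, Nat.descFactorial_zero]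
    ring
  rw [hd] at hcard
  rw [show m + 3 - 1 = m + 2 by omega, show m + 3 - 2 = m + 1 by omega,
    show m + 3 - 3 = m by omega]
  zify
  change _ < (Fintype.card (WalkData (m + 2 + 1)) : ℤ)
  rw [hcard]
  push_cast
  rw [mul_assoc _ (m : ℤ)]
  refine mul_lt_mul_of_pos_left ?_ (by positivity)
  -- In terms of `m = x - 3` the difference is a polynomial with positive coefficients.
  rw [← sub_pos]
  ring_nf
  positivity
end
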